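/- arXiv:1303.5097 — 3 statements merged into one kernel-verified Lean document; each statement's English description precedes it below -/
import Mathlib

section
/- Let Φ be a real M×N matrix, K ≥ 1, and suppose there exist constants ν > 0 and δ2K, δ3K ∈ (0,1) such that: (i) for every u ∈ Σ_{2K}, |(1/M)·‖Φu‖₁ − ν‖u‖₂| ≤ δ2K·‖u‖₂, and (ii) for every u ∈ Σ_{2K} and v ∈ Σ_K with ⟨u,v⟩ = 0, |(1/M)·⟨sign(Φu), Φv⟩| ≤ δ3K·‖v‖₂. Assume ν > δ2K + δ3K. Let x ∈ ℝ^N, let n ∈ ℝ^M satisfy ‖n‖₁ ≤ ε, and set y = Φx + n. If x* ∈ ℝ^N satisfies ‖y − Φx*‖₁ ≤ ε and ‖x*‖₁ ≤ ‖u‖₁ for every u ∈ ℝ^N with ‖y − Φu‖₁ ≤ ε, then ‖x* − x‖₂ ≤ (4/(ν − δ2K − δ3K))·ε/M + 4·((ν + δ3K − δ2K)/(ν − δ2K − δ3K))·e₀(K), where e₀(K) = ‖x − x_K‖₁/√K and x_K is a best K-term approximation of x. -/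
/-! Put `h = xstar - x`, let `S` be the index set of the best `K`-term approximation and `e` the
`ℓ1`-norm of `x` outside `S`. Minimality of `xstar` gives the cone condition
`‖h_{Sᶜ}‖₁ ≤ ‖h_S‖₁ + 2 e` (`cone_bound`).

The complement of `S` is split into blocks of size `K` in decreasing order of `|h i|`, with first
block `A`. Each block has `ℓ2`-norm at most `1/√K` times the `ℓ1`-norm of the preceding block, so
a subadditive functional that is at most `c * l2` on blocks is at most `c ‖h_{Sᶜ}‖₁ / √K` on the
part of `h` outside `S ∪ A` (`exists_block_tail_bound`).

With `a = h_{S ∪ A}` and `b = h - a`, testing `Φ h` against `sgn (Φ a)` gives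
`‖Φ h‖₁ ≥ ‖Φ a‖₁ + ⟨sgn (Φ a), Φ b⟩`. The first term is bounded below by the `ℓ1` restricted
isometry property, the second by the block lemma applied to `v ↦ -⟨sgn (Φ a), Φ v⟩ / M`; as
`‖Φ h‖₁ ≤ 2ε`, this bounds `‖a‖₂`. The block lemma applied to `l2` itself bounds `‖b‖₂`.
-/

open Finset MeasureTheory ProbabilityTheory Real

/-- componentwise sign function: 1 if positive, -1 otherwise -/
noncomputable def sgn (t : ℝ) : ℝ := if 0 < t then 1 else -1

/-- ℓ1 norm -/
noncomputable def l1 {m : ℕ} (w : Fin m → ℝ) : ℝ := ∑ j, |w j|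

/-- ℓ2 (Euclidean) norm -/
noncomputable def l2 {m : ℕ} (w : Fin m → ℝ) : ℝ := Real.sqrt (∑ j, w j ^ 2)

/-- ℓ0 "norm": number of nonzero entries -/
noncomputable def l0 {m : ℕ} (w : Fin m → ℝ) : ℕ :=
  (Finset.univ.filter fun i => w i ≠ 0).card

/-- K-sparsity: membership in Σ_K -/
noncomputable def sparse {n : ℕ} (K : ℕ) (u : Fin n → ℝ) : Prop := l0 u ≤ K

/-- Euclidean inner product -/
noncomputable def ip {m : ℕ} (u v : Fin m → ℝ) : ℝ := ∑ j, u j * v j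

/-- restriction of a vector to a set of indices (zero outside) -/
noncomputable def restrict {n : ℕ} (u : Fin n → ℝ) (S : Finset (Fin n)) : Fin n → ℝ :=
  fun i => if i ∈ S then u i else 0

/-- `xK` is a best K-term approximation of `x` -/
noncomputable def IsBestKTermApprox {n : ℕ} (K : ℕ) (x xK : Fin n → ℝ) : Prop :=
  ∃ S : Finset (Fin n), S.card = K ∧ (∀ i ∈ S, xK i = x i) ∧ (∀ i ∉ S, xK i = 0) ∧
    ∀ i ∈ S, ∀ j ∉ S, |x j| ≤ |x i|

lemma l2_add_le {m : ℕ} (u v : Fin m → ℝ) : l2 (u + v) ≤ l2 u + l2 v := by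
  have key : ∀ w : Fin m → ℝ, l2 w = ‖WithLp.toLp 2 w‖ := by
    intro w
    simp [l2, EuclideanSpace.norm_eq]
  rw [key, key, key, WithLp.toLp_add]
  exact norm_add_le _ _

lemma l1_add_le {m : ℕ} (u v : Fin m → ℝ) : l1 (u + v) ≤ l1 u + l1 v := by
  unfold l1
  rw [← Finset.sum_add_distrib]
  exact Finset.sum_le_sum fun i _ => abs_add_le _ _

lemma l1_neg {m : ℕ} (u : Fin m → ℝ) : l1 (-u) = l1 u := by
  simp [l1]

lemma ip_add_right {m : ℕ} (w u v : Fin m → ℝ) : ip w (u + v) = ip w u + ip w v := by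
  simp [ip, mul_add, Finset.sum_add_distrib]

lemma l2_restrict {m : ℕ} (h : Fin m → ℝ) (T : Finset (Fin m)) :
    l2 (restrict h T) = Real.sqrt (∑ i ∈ T, h i ^ 2) := by
  unfold l2 _root_.restrict
  congr 1
  simp

lemma sparse_restrict {m : ℕ} (h : Fin m → ℝ) {T : Finset (Fin m)} {k : ℕ} (hT : T.card ≤ k) :
    sparse k (restrict h T) := by
  refine (Finset.card_le_card ?_).trans hT
  intro i hi
  by_contra hiT
  simp [_root_.restrict, hiT] at hi

lemma restrict_union {m : ℕ} (h : Fin m → ℝ) {A B : Finset (Fin m)} (hAB : Disjoint A B) :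
    restrict h (A ∪ B) = restrict h A + restrict h B := by
  funext i
  by_cases hA : i ∈ A
  · have hB : i ∉ B := Finset.disjoint_left.mp hAB hA
    simp [_root_.restrict, hA, hB]
  · simp [_root_.restrict, hA]

lemma ip_restrict_disjoint {m : ℕ} (h : Fin m → ℝ) {A B : Finset (Fin m)} (hAB : Disjoint A B) :
    ip (restrict h A) (restrict h B) = 0 := by
  refine Finset.sum_eq_zero fun i _ => ?_
  by_cases hA : i ∈ A
  · have hB : i ∉ B := Finset.disjoint_left.mp hAB hA
    simp [_root_.restrict, hB]
  · simp [_root_.restrict, hA]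

lemma sgn_mul_self (t : ℝ) : sgn t * t = |t| := by
  unfold sgn
  split_ifs with ht
  · rw [abs_of_pos ht, one_mul]
  · rw [abs_of_nonpos (not_lt.mp ht)]
    ring

lemma sgn_mul_le (s t : ℝ) : sgn s * t ≤ |t| := by
  unfold sgn
  split_ifs
  · rw [one_mul]
    exact le_abs_self t
  · rw [neg_one_mul]
    exact neg_le_abs t

lemma exists_top_subset {m : ℕ} (h : Fin m → ℝ) (T : Finset (Fin m)) (k : ℕ) (hk : k ≤ T.card) :
    ∃ A ⊆ T, A.card = k ∧ ∀ i ∈ A, ∀ j ∈ T \ A, |h j| ≤ |h i| := by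
  induction k with
  | zero => exact ⟨∅, by simp, by simp, by simp⟩
  | succ k ih =>
    obtain ⟨A, hAT, hAc, hA⟩ := ih (by omega)
    have hne : (T \ A).Nonempty := by
      rw [← Finset.card_pos, Finset.card_sdiff_of_subset hAT]
      omega
    obtain ⟨j0, hj0, hmax⟩ := Finset.exists_max_image (T \ A) (fun i => |h i|) hne
    have hj := Finset.mem_sdiff.mp hj0
    refine ⟨insert j0 A, Finset.insert_subset hj.1 hAT, ?_, ?_⟩
    · rw [Finset.card_insert_of_notMem hj.2, hAc]
    · intro i hi j hjm
      have hjA : j ∈ T \ A := by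
        simp only [Finset.mem_sdiff, Finset.mem_insert, not_or] at hjm ⊢
        exact ⟨hjm.1, hjm.2.2⟩
      rcases Finset.mem_insert.mp hi with rfl | hi
      · exact hmax j hjA
      · exact hA i hi j hjA

/-- A block `B` dominated entrywise by a full block `A` has `ℓ2`-norm at most `1/√K` times the
`ℓ1`-norm of `A`: each entry of `B` is at most the mean of the entries of `A`. -/
lemma l2_block_le {m : ℕ} (h : Fin m → ℝ) {A B : Finset (Fin m)} {K : ℕ} (hK : 1 ≤ K)
    (hA : A.card = K) (hB : B.card ≤ K) (hAB : ∀ i ∈ A, ∀ j ∈ B, |h j| ≤ |h i|) :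
    l2 (restrict h B) ≤ (∑ i ∈ A, |h i|) / Real.sqrt K := by
  have hK0 : (0 : ℝ) < K := by exact_mod_cast hK
  set s := ∑ i ∈ A, |h i| with hs
  have hs0 : 0 ≤ s := Finset.sum_nonneg fun i _ => abs_nonneg _
  have hj : ∀ j ∈ B, h j ^ 2 ≤ (s / K) ^ 2 := by
    intro j hj
    have h1 : A.card • |h j| ≤ s := Finset.card_nsmul_le_sum A _ _ fun i hi => hAB i hi j hj
    rw [nsmul_eq_mul, hA] at h1
    rw [← sq_abs]
    refine pow_le_pow_left₀ (abs_nonneg _) ?_ 2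
    rw [le_div_iff₀ hK0]
    linarith
  rw [l2_restrict]
  refine Real.sqrt_le_iff.mpr ⟨by positivity, ?_⟩
  calc ∑ i ∈ B, h i ^ 2 ≤ B.card • (s / K) ^ 2 := Finset.sum_le_card_nsmul B _ _ hj
    _ = B.card * (s / K) ^ 2 := nsmul_eq_mul _ _
    _ ≤ K * (s / K) ^ 2 := by
        gcongr
    _ = (s / Real.sqrt K) ^ 2 := by
        rw [div_pow, div_pow, Real.sq_sqrt hK0.le]
        field_simp

/-- Block decomposition of `T` in decreasing order of `|h i|`, in functional form: `A` is the first
block, and the remaining blocks enter only through the bound on subadditive functionals `g`. -/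
lemma exists_block_tail_bound {m : ℕ} (h : Fin m → ℝ) {K : ℕ} (hK : 1 ≤ K)
    (T : Finset (Fin m)) :
    ∃ A ⊆ T, A.card ≤ K ∧ ∀ (g : (Fin m → ℝ) → ℝ) (c : ℝ), 0 ≤ c →
      (∀ u v, g (u + v) ≤ g u + g v) →
      (∀ B ⊆ T \ A, B.card ≤ K → g (restrict h B) ≤ c * l2 (restrict h B)) →
      g (restrict h (T \ A)) ≤ c * ((∑ i ∈ T, |h i|) / Real.sqrt K) := by
  induction T using Finset.strongInduction with
  | H T ih =>
    by_cases hT : T.card ≤ K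
    · refine ⟨T, Finset.Subset.refl T, hT, fun g c hc _ hg => ?_⟩
      have h0 := hg ∅ (by simp) (by simp)
      rw [l2_restrict, Finset.sum_empty, Real.sqrt_zero, mul_zero] at h0
      rw [Finset.sdiff_self]
      exact h0.trans (by positivity)
    · obtain ⟨A, hAT, hAc, hA⟩ := exists_top_subset h T K (by omega)
      have hAne : A.Nonempty := by
        rw [← Finset.card_pos]
        omega
      obtain ⟨A2, hA2, hA2c, hrec⟩ := ih (T \ A) (Finset.sdiff_ssubset hAT hAne)
      refine ⟨A, hAT, hAc.le, fun g c hc hadd hg => ?_⟩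
      have h1 := hrec g c hc hadd fun B hB => hg B (hB.trans Finset.sdiff_subset)
      have h2 := hg A2 hA2 hA2c
      have h3 := l2_block_le h hK hAc hA2c fun i hi j hj => hA i hi j (hA2 hj)
      have h4 : restrict h (T \ A) = restrict h A2 + restrict h ((T \ A) \ A2) := by
        rw [← restrict_union h Finset.disjoint_sdiff, Finset.union_sdiff_of_subset hA2]
      have h5 : ∑ i ∈ T, |h i| = ∑ i ∈ T \ A, |h i| + ∑ i ∈ A, |h i| :=
        (Finset.sum_sdiff hAT).symm
      rw [h4, h5, add_div, mul_add]
      have h6 := mul_le_mul_of_nonneg_left h3 hc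
      have h7 := hadd (restrict h A2) (restrict h ((T \ A) \ A2))
      linarith

lemma cone_bound {m : ℕ} (x z : Fin m → ℝ) (S : Finset (Fin m)) (hz : l1 z ≤ l1 x) :
    ∑ i ∈ Sᶜ, |(z - x) i| ≤ ∑ i ∈ S, |(z - x) i| + 2 * ∑ i ∈ Sᶜ, |x i| := by
  unfold l1 at hz
  rw [← Finset.sum_add_sum_compl S, ← Finset.sum_add_sum_compl S (fun j => |x j|)] at hz
  have h1 : ∑ i ∈ S, |x i| ≤ ∑ i ∈ S, |(z - x) i| + ∑ i ∈ S, |z i| := by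
    rw [← Finset.sum_add_distrib]
    refine Finset.sum_le_sum fun i _ => ?_
    have := abs_sub_abs_le_abs_sub (x i) (z i)
    rw [Pi.sub_apply, abs_sub_comm]
    linarith
  have h2 : ∑ i ∈ Sᶜ, |(z - x) i| ≤ ∑ i ∈ Sᶜ, |z i| + ∑ i ∈ Sᶜ, |x i| := by
    rw [← Finset.sum_add_distrib]
    exact Finset.sum_le_sum fun i _ => abs_sub _ _
  linarith

lemma sum_abs_div_sqrt_le {m : ℕ} (h : Fin m → ℝ) {S : Finset (Fin m)} {K : ℕ} (hK : 1 ≤ K)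
    (hS : S.card = K) : (∑ i ∈ S, |h i|) / Real.sqrt K ≤ l2 (restrict h S) := by
  have hK0 : (0 : ℝ) < K := by exact_mod_cast hK
  rw [div_le_iff₀ (Real.sqrt_pos.mpr hK0), l2_restrict, ← Real.sqrt_mul' _ hK0.le]
  apply Real.le_sqrt_of_sq_le
  have := sq_sum_le_card_mul_sum_sq (s := S) (f := fun i => |h i|)
  simp only [sq_abs, hS] at this
  linarith

theorem bpdn_l1_instance_optimality_general
    {M N : ℕ} (Φ : Matrix (Fin M) (Fin N) ℝ) (K : ℕ) (hK : 1 ≤ K)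
    (ν δ2K δ3K : ℝ) (hν : 0 < ν)
    (hδ2 : δ2K ∈ Set.Ioo (0 : ℝ) 1) (hδ3 : δ3K ∈ Set.Ioo (0 : ℝ) 1)
    (hΦ1 : ∀ u : Fin N → ℝ, sparse (2 * K) u →
      |(1 / (M : ℝ)) * l1 (Φ.mulVec u) - ν * l2 u| ≤ δ2K * l2 u)
    (hΦ2 : ∀ u v : Fin N → ℝ, sparse (2 * K) u → sparse K v → ip u v = 0 →
      |(1 / (M : ℝ)) * ip (fun j => sgn (Φ.mulVec u j)) (Φ.mulVec v)| ≤ δ3K * l2 v)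
    (hsum : δ2K + δ3K < ν)
    (x : Fin N → ℝ) (ε : ℝ) (n : Fin M → ℝ) (hn : l1 n ≤ ε)
    (y : Fin M → ℝ) (hy : y = Φ.mulVec x + n)
    (xstar : Fin N → ℝ)
    (hfeas : l1 (y - Φ.mulVec xstar) ≤ ε)
    (hmin : ∀ u : Fin N → ℝ, l1 (y - Φ.mulVec u) ≤ ε → l1 xstar ≤ l1 u)
    (xK : Fin N → ℝ) (hxK : IsBestKTermApprox K x xK) :
    l2 (xstar - x) ≤
      (4 / (ν - δ2K - δ3K)) * (ε / (M : ℝ)) +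
        4 * ((ν + δ3K - δ2K) / (ν - δ2K - δ3K)) * (l1 (x - xK) / Real.sqrt K) := by
  obtain ⟨S, hSc, hxS, hxS', -⟩ := hxK
  obtain ⟨hδ2, -⟩ := hδ2
  obtain ⟨hδ3, -⟩ := hδ3
  set h : Fin N → ℝ := xstar - x with hh
  have hsqrt : 0 < Real.sqrt K := Real.sqrt_pos.mpr (by exact_mod_cast hK)
  have he : l1 (x - xK) = ∑ i ∈ Sᶜ, |x i| := by
    unfold l1
    rw [← Finset.sum_add_sum_compl S, Finset.sum_eq_zero, zero_add]
    · refine Finset.sum_congr rfl fun i hi => ?_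
      rw [Pi.sub_apply, hxS' i (Finset.mem_compl.mp hi), sub_zero]
    · intro i hi
      rw [Pi.sub_apply, hxS i hi, sub_self, abs_zero]
  set e0 := l1 (x - xK) / Real.sqrt K with he0
  have he0' : 0 ≤ e0 := div_nonneg (Finset.sum_nonneg fun i _ => abs_nonneg _) hsqrt.le
  have hxfeas : l1 (y - Φ.mulVec x) ≤ ε := by
    rw [hy, add_sub_cancel_left]
    exact hn
  have hcone := cone_bound x xstar S (hmin x hxfeas)
  obtain ⟨A, hAS, hAc, hblock⟩ := exists_block_tail_bound h hK Sᶜ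
  set a := restrict h (S ∪ A) with ha
  set b := restrict h (Sᶜ \ A) with hb
  have hdisj : Disjoint (S ∪ A) (Sᶜ \ A) := by
    rw [Finset.disjoint_left]
    intro i hi hi'
    simp only [Finset.mem_union, Finset.mem_sdiff, Finset.mem_compl] at hi hi'
    tauto
  have hab : h = a + b := by
    rw [ha, hb, ← restrict_union h hdisj]
    funext i
    by_cases hS : i ∈ S <;> by_cases hA : i ∈ A <;> simp [_root_.restrict, hS, hA]
  have hasparse : sparse (2 * K) a :=
    sparse_restrict h ((Finset.card_union_le S A).trans (by omega))
  have hSa : l2 (restrict h S) ≤ l2 a := by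
    rw [ha, l2_restrict, l2_restrict]
    exact Real.sqrt_le_sqrt (Finset.sum_le_sum_of_subset_of_nonneg Finset.subset_union_left
      fun i _ _ => sq_nonneg _)
  have htail : (∑ i ∈ Sᶜ, |h i|) / Real.sqrt K ≤ l2 a + 2 * e0 := by
    have h1 := sum_abs_div_sqrt_le h hK hSc
    have h2 := div_le_div_of_nonneg_right hcone hsqrt.le
    rw [add_div, mul_div_assoc, ← he, ← he0] at h2
    linarith
  have hb2 : l2 b ≤ l2 a + 2 * e0 := by
    have := hblock l2 1 zero_le_one l2_add_le fun B _ _ => (one_mul _).ge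
    linarith
  set w : Fin M → ℝ := fun j => sgn (Φ.mulVec a j) with hw
  have hMinv : (0 : ℝ) ≤ 1 / M := by positivity
  have hipb : -((1 / (M : ℝ)) * ip w (Φ.mulVec b)) ≤ δ3K * (l2 a + 2 * e0) := by
    refine (hblock (fun v => -((1 / (M : ℝ)) * ip w (Φ.mulVec v))) δ3K hδ3.le ?_ ?_).trans
      (mul_le_mul_of_nonneg_left htail hδ3.le)
    · intro u v
      rw [Matrix.mulVec_add, ip_add_right]
      exact le_of_eq (by ring)
    · intro B hB hBc
      have := hΦ2 a (restrict h B) hasparse (sparse_restrict h hBc)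
        (ip_restrict_disjoint h (hdisj.mono_right hB))
      exact (neg_le_abs _).trans this
  have hipa : ip w (Φ.mulVec a) = l1 (Φ.mulVec a) :=
    Finset.sum_congr rfl fun j _ => sgn_mul_self _
  have hiph : ip w (Φ.mulVec h) ≤ l1 (Φ.mulVec h) :=
    Finset.sum_le_sum fun j _ => sgn_mul_le _ _
  have hΦh : l1 (Φ.mulVec h) ≤ 2 * ε := by
    have h1 : Φ.mulVec h = (y - Φ.mulVec x) + -(y - Φ.mulVec xstar) := by
      rw [hh, Matrix.mulVec_sub]
      abel
    have h2 := l1_add_le (y - Φ.mulVec x) (-(y - Φ.mulVec xstar))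
    rw [l1_neg, ← h1] at h2
    linarith
  have hmain : (1 / (M : ℝ)) * l1 (Φ.mulVec a) + (1 / (M : ℝ)) * ip w (Φ.mulVec b)
      ≤ 2 * (ε / M) := by
    have h1 : ip w (Φ.mulVec h) = l1 (Φ.mulVec a) + ip w (Φ.mulVec b) := by
      rw [hab, Matrix.mulVec_add, ip_add_right, hipa]
    have h2 := mul_le_mul_of_nonneg_left (hiph.trans hΦh) hMinv
    rw [h1] at h2
    calc _ = (1 / (M : ℝ)) * (l1 (Φ.mulVec a) + ip w (Φ.mulVec b)) := by ring
      _ ≤ (1 / (M : ℝ)) * (2 * ε) := h2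
      _ = 2 * (ε / M) := by ring
  have hrip := (abs_le.mp (hΦ1 a hasparse)).1
  have htri : l2 h ≤ l2 a + l2 b := by
    rw [hab]
    exact l2_add_le a b
  have hD : 0 < ν - δ2K - δ3K := by linarith
  have hbound : (ν - δ2K - δ3K) * l2 a ≤ 2 * (ε / M) + 2 * δ3K * e0 := by linarith
  have hrw : 4 / (ν - δ2K - δ3K) * (ε / (M : ℝ)) +
      4 * ((ν + δ3K - δ2K) / (ν - δ2K - δ3K)) * e0 =
      (4 * (ε / (M : ℝ)) + 4 * (ν + δ3K - δ2K) * e0) / (ν - δ2K - δ3K) := by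
    ring
  rw [hrw, le_div_iff₀ hD]
  have hfin : l2 h * (ν - δ2K - δ3K) ≤ (2 * l2 a + 2 * e0) * (ν - δ2K - δ3K) :=
    mul_le_mul_of_nonneg_right (by linarith) hD.le
  -- The argument yields the coefficient `2 (ν + δ3K - δ2K)` of `e0`, half of what is needed.
  have hslack : 0 ≤ (ν + δ3K - δ2K) * e0 := mul_nonneg (by linarith) he0'
  linarith
end

section
/- There exist constants C, c > 0 such that for all positive integers N, M, K with K ≤ N and all δ ∈ (0,1], if M ≥ C·δ⁻⁶·K·log(2N/K), then a random M×N matrix Φ with independent standard Gaussian N(0,1) entries satisfies, with probability at least 1 − 8·exp(−c·δ²·M), the following two properties simultaneously: for all u, v ∈ Σ_K with ⟨u,v⟩ = 0, (i) |(1/M)·‖Φu‖₁ − √(2/π)·‖u‖₂| ≤ δ·‖u‖₂, and (ii) |(1/M)·⟨sign(Φu), Φv⟩| ≤ δ·‖v‖₂. -/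
/-!
The proof reduces the discontinuous statement (ii) to the continuous function
`f(x) = (1/M)‖Φx‖₁` (`avgAbs`) by convexity. Write `F(x) = f(x) - √(2/π)‖x‖₂` (`dev`) for the
deviation of `f` from its mean. Since `sign(Φu)` is a subgradient of the `ℓ¹` norm at `Φu`, for
orthogonal unit vectors `u, v`
  `δ · (1/M)⟨sign(Φu), Φv⟩ ≤ f(u + δv) - f(u)`
  `                        = (F(u + δv) - F(u)) + √(2/π)(√(1 + δ²) - 1)`,
and the last term is at most `δ²/2`. Replacing `v` by `-v` gives the two-sided bound, so it is
enough to control the increments `F(u + δv) - F(u)` to accuracy of order `δ²`. The case `u = 0`,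
where `sign(Φu)` is the constant vector `-1`, concerns the empirical mean of the rows instead.

For fixed `u, v` the increment is an average of `M` independent variables dominated by
`δ|⟨φ, v⟩|`, so it is sub-Gaussian at scale `δ` and deviates by more than `δ · δ/4` only with
probability `2 exp(-δ²M/384)`: this is `concentration`, a Chernoff bound based on
`exp y ≤ y + exp(y²)` and the Gaussian integral of `exp(a x²)`.

Uniformity comes from a finite net (`exists_net`) of the `K`-sparse unit ball at scale
`ε = δ²/60`, obtained by rounding every coordinate towards zero to the lattice `(ε/√K)ℤ`. This
keeps the support, and the integer vectors that occur have `ℓ¹` norm at most `K/ε`, so a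
generating-function count bounds the logarithm of the size of the net by a multiple of
`K(1/ε + log(N/K) + 1)`. That is a small fraction of `δ²M` under the hypothesis on `M`.
The passage from the net to all sparse vectors uses `f(x) ≤ 4‖x‖₂` on sparse vectors, which
follows from the net by the usual self-bounding of a supremum (`avgAbs_le`).
-/

open Finset MeasureTheory ProbabilityTheory Real

/-! ### Linear forms of a standard Gaussian row -/

/-- The law of one row of the matrix: the standard Gaussian measure on `ℝⁿ`. -/
noncomputable abbrev rowMeasure (n : ℕ) : Measure (Fin n → ℝ) :=
  Measure.pi fun _ : Fin n => gaussianReal 0 1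

lemma l2_nonneg {n : ℕ} (w : Fin n → ℝ) : 0 ≤ l2 w := Real.sqrt_nonneg _

lemma l2_sq {n : ℕ} (w : Fin n → ℝ) : l2 w ^ 2 = ∑ j, w j ^ 2 :=
  Real.sq_sqrt (Finset.sum_nonneg fun _ _ => sq_nonneg _)

lemma measurable_ip {n : ℕ} (w : Fin n → ℝ) : Measurable (fun φ : Fin n → ℝ => ip φ w) := by
  unfold ip; fun_prop

/-- The form `⟨φ, w⟩` of a standard Gaussian vector `φ` has the law of `‖w‖₂` times a standard
Gaussian variable; the characteristic functions agree. -/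
lemma map_ip {n : ℕ} (w : Fin n → ℝ) :
    (rowMeasure n).map (fun φ => ip φ w) = (gaussianReal 0 1).map (fun x => l2 w * x) := by
  have hm := measurable_ip w
  have : IsProbabilityMeasure ((rowMeasure n).map (fun φ => ip φ w)) :=
    Measure.isProbabilityMeasure_map hm.aemeasurable
  rw [gaussianReal_map_const_mul]
  apply Measure.ext_of_charFun
  ext t
  rw [charFun_gaussianReal, charFun_apply_real, integral_map hm.aemeasurable (by fun_prop)]
  have h1 : ∀ φ : Fin n → ℝ, Complex.exp (t * (ip φ w : ℝ) * Complex.I)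
      = ∏ i, Complex.exp ((t * w i : ℝ) * (φ i : ℝ) * Complex.I) := by
    intro φ
    rw [← Complex.exp_sum]
    congr 1
    unfold ip
    push_cast
    rw [Finset.mul_sum, Finset.sum_mul]
    exact Finset.sum_congr rfl fun i _ => by ring
  simp_rw [h1]
  rw [integral_fintype_prod_eq_prod (𝕜 := ℂ)
    (f := fun i (x : ℝ) => Complex.exp ((t * w i : ℝ) * (x : ℝ) * Complex.I))]
  have h2 : ∀ i, ∫ x : ℝ, Complex.exp ((t * w i : ℝ) * (x : ℝ) * Complex.I) ∂(gaussianReal 0 1)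
      = Complex.exp (-((t * w i) ^ 2 / 2 : ℝ)) := by
    intro i
    rw [← charFun_apply_real, charFun_gaussianReal]
    congr 1
    push_cast; simp
  simp_rw [h2]
  rw [← Complex.exp_sum]
  congr 1
  have h3 : ((l2 w : ℂ)) ^ 2 = ∑ i, (w i : ℂ) ^ 2 := by
    rw [← Complex.ofReal_pow, l2_sq]; push_cast; rfl
  simp only [NNReal.coe_mk, mul_zero, Complex.ofReal_zero, zero_mul, mul_one, zero_sub]
  push_cast
  rw [h3, Finset.sum_neg_distrib, Finset.sum_mul, Finset.sum_div]
  congr 1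
  exact Finset.sum_congr rfl fun i _ => by ring

lemma integral_abs_gaussian : ∫ x : ℝ, |x| ∂(gaussianReal 0 1) = Real.sqrt (2 / Real.pi) := by
  rw [integral_gaussianReal_eq_integral_smul (by norm_num)]
  have h1 : ∀ x : ℝ, gaussianPDFReal 0 1 x • |x|
      = (fun y : ℝ => (√(2 * π))⁻¹ * (y ^ (1:ℝ) * Real.exp (- (1/2) * y ^ (2:ℝ)))) |x| := by
    intro x
    simp only [gaussianPDFReal, NNReal.coe_one, mul_one, sub_zero, smul_eq_mul, Real.rpow_one,
      Real.rpow_two, sq_abs]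
    rw [show -x ^ 2 / 2 = -(1/2) * x ^ 2 by ring]
    ring
  rw [integral_congr_ae (Filter.Eventually.of_forall h1),
    integral_comp_abs (f := fun y : ℝ => (√(2 * π))⁻¹ * (y ^ (1:ℝ) *
      Real.exp (- (1/2) * y ^ (2:ℝ)))), integral_const_mul,
    integral_rpow_mul_exp_neg_mul_rpow (by norm_num) (by norm_num) (by norm_num)]
  norm_num
  have h2 : (√2) ^ 2 = 2 := Real.sq_sqrt (by norm_num)
  field_simp
  linarith

/-- The integral of `exp (a x²)` against the standard Gaussian is `(1 - 2a)^(-1/2)`, which is at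
most `exp (2a)` when `0 ≤ a ≤ 1/4`. -/
lemma integral_exp_sq_gaussian {a : ℝ} (ha : a ≤ 1 / 4) :
    Integrable (fun x : ℝ => Real.exp (a * x ^ 2)) (gaussianReal 0 1) ∧
    ((0 ≤ a) → ∫ x : ℝ, Real.exp (a * x ^ 2) ∂(gaussianReal 0 1) ≤ Real.exp (2 * a)) := by
  have h1 : ∀ x : ℝ, gaussianPDFReal 0 1 x * Real.exp (a * x ^ 2)
      = (√(2 * π))⁻¹ * Real.exp (- (1/2 - a) * x ^ 2) := by
    intro x
    simp only [gaussianPDFReal, NNReal.coe_one, mul_one, sub_zero]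
    rw [mul_assoc, ← Real.exp_add]
    congr 2; ring
  constructor
  · rw [gaussianReal_of_var_ne_zero _ (by norm_num)]
    rw [integrable_withDensity_iff_integrable_smul' (measurable_gaussianPDF _ _)
      (Filter.Eventually.of_forall fun _ => gaussianPDF_lt_top)]
    simp only [toReal_gaussianPDF, smul_eq_mul, h1]
    exact (integrable_exp_neg_mul_sq (by linarith)).const_mul _
  · intro ha0
    rw [integral_gaussianReal_eq_integral_smul (by norm_num)]
    simp only [smul_eq_mul, h1]
    rw [integral_const_mul, integral_gaussian]
    have hp : 0 < 1 - 2 * a := by linarith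
    have h2 : (√(2 * π))⁻¹ * √(π / (1 / 2 - a)) = √(1 / (1 - 2 * a)) := by
      rw [← Real.sqrt_inv, ← Real.sqrt_mul (by positivity)]
      congr 1
      have : (1 / 2 - a) ≠ 0 := by linarith
      field_simp
    rw [h2, Real.sqrt_le_left (Real.exp_pos _).le, ← Real.exp_nat_mul]
    rw [div_le_iff₀ hp]
    -- `exp (4a) ≥ 1 + 4a` and `(1 + 4a)(1 - 2a) ≥ 1` for `0 ≤ a ≤ 1/4`
    have h3 := Real.add_one_le_exp (4 * a)
    push_cast
    rw [show (2:ℝ) * (2 * a) = 4 * a by ring]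
    nlinarith

lemma exp_le_id_add_exp_sq (y : ℝ) : Real.exp y ≤ y + Real.exp (y ^ 2) := by
  have h2 := Real.add_one_le_exp (y ^ 2)
  rcases le_or_gt |y| 1 with h | h
  · have h1 := (abs_le.1 (Real.abs_exp_sub_one_sub_id_le h)).2
    linarith
  · rcases lt_abs.1 h with h | h
    · have : Real.exp y ≤ Real.exp (y ^ 2) := Real.exp_le_exp.2 (by nlinarith)
      linarith
    · have : Real.exp y ≤ 1 := Real.exp_le_one_iff.2 (by linarith)
      nlinarith

lemma integrable_comp_ip {n : ℕ} (w : Fin n → ℝ) {F : ℝ → ℝ} (hF : Measurable F)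
    (h : Integrable (fun x => F (l2 w * x)) (gaussianReal 0 1)) :
    Integrable (fun φ => F (ip φ w)) (rowMeasure n) := by
  have h1 : Integrable F ((gaussianReal 0 1).map (fun x => l2 w * x)) :=
    (integrable_map_measure hF.aestronglyMeasurable (by fun_prop)).2 h
  rw [← map_ip] at h1
  exact (integrable_map_measure hF.aestronglyMeasurable (measurable_ip w).aemeasurable).1 h1

lemma integral_comp_ip {n : ℕ} (w : Fin n → ℝ) {F : ℝ → ℝ} (hF : Measurable F) :
    ∫ φ, F (ip φ w) ∂(rowMeasure n) = ∫ x, F (l2 w * x) ∂(gaussianReal 0 1) := by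
  rw [← integral_map (φ := fun φ => ip φ w) (measurable_ip w).aemeasurable
    hF.aestronglyMeasurable, map_ip, integral_map (by fun_prop) hF.aestronglyMeasurable]

lemma integrable_id_gaussian : Integrable (fun x : ℝ => x) (gaussianReal 0 1) :=
  (memLp_id_gaussianReal 1).integrable (by norm_num)

lemma integrable_ip {n : ℕ} (w : Fin n → ℝ) :
    Integrable (fun φ => ip φ w) (rowMeasure n) :=
  integrable_comp_ip w measurable_id (integrable_id_gaussian.const_mul _)

lemma integral_ip {n : ℕ} (w : Fin n → ℝ) : ∫ φ, ip φ w ∂(rowMeasure n) = 0 := by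
  have h := integral_comp_ip w measurable_id
  simp only [id] at h
  rw [h, integral_const_mul, integral_id_gaussianReal, mul_zero]

lemma integral_abs_ip {n : ℕ} (w : Fin n → ℝ) :
    ∫ φ, |ip φ w| ∂(rowMeasure n) = √(2 / π) * l2 w := by
  rw [integral_comp_ip w (F := fun x => |x|) measurable_id.abs]
  simp only [abs_mul, abs_of_nonneg (l2_nonneg w)]
  rw [integral_const_mul, integral_abs_gaussian, mul_comm]

lemma sqrt_two_div_pi_le_one : √(2 / π) ≤ 1 := by
  rw [Real.sqrt_le_one, div_le_one Real.pi_pos]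
  linarith [Real.pi_gt_three]

/-! ### Concentration of averages over the rows -/

/-- A function `Z` of a Gaussian row dominated by a linear form `⟨φ, w⟩` with `‖w‖₂ ≤ 1` has, after
centering, a sub-Gaussian moment generating function near zero. The linear term in
`exp y ≤ y + exp (y²)` integrates to zero, which makes the bound tend to `1` quadratically. -/
lemma row_mgf_le {n : ℕ} {Z : (Fin n → ℝ) → ℝ} (hZ : Measurable Z) {w : Fin n → ℝ}
    (hw : l2 w ≤ 1) (hZw : ∀ φ, |Z φ| ≤ |ip φ w|) {s : ℝ} (hs : s ^ 2 ≤ 1 / 8) :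
    Integrable (fun φ => Real.exp (s * (Z φ - ∫ ψ, Z ψ ∂(rowMeasure n)))) (rowMeasure n) ∧
    ∫ φ, Real.exp (s * (Z φ - ∫ ψ, Z ψ ∂(rowMeasure n))) ∂(rowMeasure n)
      ≤ Real.exp (6 * s ^ 2) := by
  set m := ∫ ψ, Z ψ ∂(rowMeasure n) with hm
  have hw0 := l2_nonneg w
  have hZi : Integrable Z (rowMeasure n) :=
    (integrable_ip w).mono hZ.aestronglyMeasurable (Filter.Eventually.of_forall hZw)
  have hm1 : m ^ 2 ≤ 1 := by
    have h1 : |m| ≤ √(2 / π) * l2 w := by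
      rw [← integral_abs_ip]
      exact (abs_integral_le_integral_abs).trans
        (integral_mono hZi.abs (integrable_ip w).abs hZw)
    have h2 : |m| ≤ 1 := h1.trans (by nlinarith [sqrt_two_div_pi_le_one, Real.sqrt_nonneg (2 / π)])
    rw [← sq_abs]
    nlinarith [abs_nonneg m]
  -- the pointwise bound `(Z - m)² ≤ 2 Z² + 2 m² ≤ 2 ⟨φ, w⟩² + 2`
  have hpt : ∀ φ, Real.exp (s * (Z φ - m)) ≤ s * (Z φ - m)
      + Real.exp (2 * s ^ 2) * Real.exp (2 * s ^ 2 * ip φ w ^ 2) := by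
    intro φ
    refine (exp_le_id_add_exp_sq _).trans ?_
    rw [← Real.exp_add]
    gcongr
    have h1 : Z φ ^ 2 ≤ ip φ w ^ 2 := sq_le_sq.2 (hZw φ)
    have h2 : (Z φ - m) ^ 2 ≤ 2 * ip φ w ^ 2 + 2 := by nlinarith [sq_nonneg (Z φ + m)]
    rw [mul_pow]
    nlinarith [mul_le_mul_of_nonneg_left h2 (sq_nonneg s)]
  have hl : l2 w ^ 2 ≤ 1 := by nlinarith
  have ha : 2 * s ^ 2 * l2 w ^ 2 ≤ 1 / 4 := by nlinarith [sq_nonneg s, sq_nonneg (l2 w)]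
  obtain ⟨hI, hB⟩ := integral_exp_sq_gaussian ha
  have hF : Measurable fun x : ℝ => Real.exp (2 * s ^ 2 * x ^ 2) := by fun_prop
  have hfun : (fun x : ℝ => Real.exp (2 * s ^ 2 * (l2 w * x) ^ 2))
      = fun x : ℝ => Real.exp (2 * s ^ 2 * l2 w ^ 2 * x ^ 2) := by
    ext x; congr 1; ring
  have hEi : Integrable (fun φ => Real.exp (2 * s ^ 2 * ip φ w ^ 2)) (rowMeasure n) := by
    refine integrable_comp_ip w hF ?_
    rw [hfun]; exact hI
  have hE : ∫ φ, Real.exp (2 * s ^ 2 * ip φ w ^ 2) ∂(rowMeasure n) ≤ Real.exp (4 * s ^ 2) := by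
    rw [integral_comp_ip w hF, hfun]
    refine (hB (by positivity)).trans (Real.exp_le_exp.2 ?_)
    nlinarith [sq_nonneg s]
  have hlin : Integrable (fun φ => s * (Z φ - m)) (rowMeasure n) :=
    (hZi.sub (integrable_const m)).const_mul s
  have hdom : Integrable (fun φ => s * (Z φ - m)
      + Real.exp (2 * s ^ 2) * Real.exp (2 * s ^ 2 * ip φ w ^ 2)) (rowMeasure n) :=
    hlin.add (hEi.const_mul _)
  have hmain : Integrable (fun φ => Real.exp (s * (Z φ - m))) (rowMeasure n) := by
    refine hdom.mono (by fun_prop) (Filter.Eventually.of_forall fun φ => ?_)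
    rw [Real.norm_of_nonneg (Real.exp_pos _).le]
    exact (hpt φ).trans (le_abs_self _)
  refine ⟨hmain, (integral_mono hmain hdom hpt).trans ?_⟩
  rw [integral_add hlin (hEi.const_mul _), integral_const_mul, integral_const_mul,
    integral_sub hZi (integrable_const m)]
  have : m - ∫ _ : Fin n → ℝ, m ∂(rowMeasure n) = 0 := by simp
  rw [← hm, this, mul_zero, zero_add,
    show 6 * s ^ 2 = 2 * s ^ 2 + 4 * s ^ 2 by ring, Real.exp_add]
  gcongr

/-- The law of the `M × n` Gaussian matrix, as a product over its rows. -/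
noncomputable abbrev matMeasure (M n : ℕ) : Measure (Fin M → Fin n → ℝ) :=
  Measure.pi fun _ : Fin M => rowMeasure n

/-- Chernoff bound with the parameter `τ / 12`, which minimizes `-s τ + 6 s²`. -/
lemma one_sided {M n : ℕ} {Z : (Fin n → ℝ) → ℝ} (hZ : Measurable Z)
    {w : Fin n → ℝ} (hw : l2 w ≤ 1) (hZw : ∀ φ, |Z φ| ≤ |ip φ w|) {τ : ℝ} (h0 : 0 < τ)
    (h1 : τ ≤ 1) :
    (matMeasure M n).real {Φ | M * τ ≤ ∑ j, (Z (Φ j) - ∫ ψ, Z ψ ∂(rowMeasure n))}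
      ≤ Real.exp (-(M * τ ^ 2 / 24)) := by
  set m := ∫ ψ, Z ψ ∂(rowMeasure n)
  have hs : (τ / 12) ^ 2 ≤ 1 / 8 := by nlinarith
  obtain ⟨hI, hB⟩ := row_mgf_le hZ hw hZw hs
  have hprod : ∀ Φ : Fin M → Fin n → ℝ, Real.exp (τ / 12 * ∑ j, (Z (Φ j) - m))
      = ∏ j, Real.exp (τ / 12 * (Z (Φ j) - m)) := by
    intro Φ
    rw [Finset.mul_sum, Real.exp_sum]
  have hint : Integrable (fun Φ : Fin M → Fin n → ℝ => Real.exp (τ / 12 * ∑ j, (Z (Φ j) - m)))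
      (matMeasure M n) := by
    simp_rw [hprod]
    exact Integrable.fintype_prod (f := fun _ φ => Real.exp (τ / 12 * (Z φ - m))) (fun _ => hI)
  refine (measure_ge_le_exp_mul_mgf (M * τ) (by positivity) hint).trans ?_
  have hmgf : mgf (fun Φ : Fin M → Fin n → ℝ => ∑ j, (Z (Φ j) - m)) (matMeasure M n) (τ / 12)
      ≤ Real.exp (6 * (τ / 12) ^ 2) ^ M := by
    unfold mgf
    simp_rw [hprod]
    rw [integral_fintype_prod_eq_prod (𝕜 := ℝ)
      (f := fun (_ : Fin M) φ => Real.exp (τ / 12 * (Z φ - m)))]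
    rw [Finset.prod_const, Finset.card_univ, Fintype.card_fin]
    exact pow_le_pow_left₀ (integral_nonneg fun _ => (Real.exp_pos _).le) hB M
  refine (mul_le_mul_of_nonneg_left hmgf (Real.exp_pos _).le).trans ?_
  rw [← Real.exp_nat_mul, ← Real.exp_add]
  exact Real.exp_le_exp.2 (le_of_eq (by ring))

lemma concentration {M n : ℕ} (hM : 0 < M) {Z : (Fin n → ℝ) → ℝ} (hZ : Measurable Z)
    {w : Fin n → ℝ} (hw : l2 w ≤ 1) (hZw : ∀ φ, |Z φ| ≤ |ip φ w|) {τ : ℝ} (h0 : 0 < τ)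
    (h1 : τ ≤ 1) :
    (matMeasure M n).real
        {Φ | τ < |(1 / (M : ℝ)) * (∑ j, Z (Φ j)) - ∫ ψ, Z ψ ∂(rowMeasure n)|}
      ≤ 2 * Real.exp (-(M * τ ^ 2 / 24)) := by
  have hM' : (0 : ℝ) < M := by exact_mod_cast hM
  have hA := one_sided (M := M) hZ hw hZw h0 h1
  have hB := one_sided (M := M) hZ.neg hw (fun φ => by simpa using hZw φ) h0 h1
  simp only [Pi.neg_apply, integral_neg] at hB
  set m := ∫ ψ, Z ψ ∂(rowMeasure n)
  have hsub : {Φ : Fin M → Fin n → ℝ | τ < |(1 / (M : ℝ)) * (∑ j, Z (Φ j)) - m|}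
      ⊆ {Φ | M * τ ≤ ∑ j, (Z (Φ j) - m)} ∪ {Φ | M * τ ≤ ∑ j, (-Z (Φ j) - -m)} := by
    intro Φ hΦ
    have hS : (1 / (M : ℝ)) * (∑ j, Z (Φ j)) - m = (∑ j, (Z (Φ j) - m)) / M := by
      rw [Finset.sum_sub_distrib]
      simp
      field_simp
    have hS' : ∑ j, (-Z (Φ j) - -m) = - ∑ j, (Z (Φ j) - m) := by
      rw [← Finset.sum_neg_distrib]
      exact Finset.sum_congr rfl fun _ _ => by ring
    simp only [Set.mem_ofPred_eq, Set.mem_union] at hΦ ⊢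
    rw [hS, lt_abs] at hΦ
    rw [hS']
    rcases hΦ with h | h
    · left
      rw [lt_div_iff₀ hM'] at h
      linarith
    · right
      rw [← neg_div, lt_div_iff₀ hM'] at h
      linarith
  calc _ ≤ _ := measureReal_mono hsub
    _ ≤ _ := measureReal_union_le _ _
    _ ≤ _ := by linarith

lemma union_concentration {M n : ℕ} (hM : 0 < M) {ι : Type*} (I : Finset ι)
    (Z : ι → (Fin n → ℝ) → ℝ) (w : ι → Fin n → ℝ) (m : ι → ℝ)
    (hZ : ∀ i ∈ I, Measurable (Z i)) (hw : ∀ i ∈ I, l2 (w i) ≤ 1)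
    (hZw : ∀ i ∈ I, ∀ φ, |Z i φ| ≤ |ip φ (w i)|)
    (hm : ∀ i ∈ I, ∫ ψ, Z i ψ ∂(rowMeasure n) = m i) {τ : ℝ} (h0 : 0 < τ) (h1 : τ ≤ 1) :
    (matMeasure M n).real {Φ | ∃ i ∈ I, τ < |(1 / (M : ℝ)) * (∑ j, Z i (Φ j)) - m i|}
      ≤ I.card * (2 * Real.exp (-(M * τ ^ 2 / 24))) := by
  have hset : {Φ : Fin M → Fin n → ℝ | ∃ i ∈ I, τ < |(1 / (M : ℝ)) * (∑ j, Z i (Φ j)) - m i|}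
      = ⋃ i ∈ I, {Φ | τ < |(1 / (M : ℝ)) * (∑ j, Z i (Φ j)) - m i|} := by
    ext Φ; simp
  rw [hset]
  refine (measureReal_biUnion_finset_le I _).trans ?_
  rw [← nsmul_eq_mul]
  refine Finset.sum_le_card_nsmul _ _ _ fun i hi => ?_
  have := concentration hM (hZ i hi) (hw i hi) (hZw i hi) h0 h1
  rwa [hm i hi] at this

/-! ### Elementary facts on norms and sparsity -/

lemma l2_eq_norm {n : ℕ} (w : Fin n → ℝ) : l2 w = ‖WithLp.toLp 2 w‖ := by
  rw [EuclideanSpace.norm_eq]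
  simp [l2]

lemma l2_add_le_s2 {n : ℕ} (x y : Fin n → ℝ) : l2 (x + y) ≤ l2 x + l2 y := by
  simp only [l2_eq_norm, WithLp.toLp_add]
  exact norm_add_le _ _

lemma l2_smul {n : ℕ} (a : ℝ) (x : Fin n → ℝ) : l2 (a • x) = |a| * l2 x := by
  simp only [l2_eq_norm, WithLp.toLp_smul, norm_smul, Real.norm_eq_abs]

lemma abs_l2_sub_le {n : ℕ} (x y : Fin n → ℝ) : |l2 x - l2 y| ≤ l2 (x - y) := by
  simp only [l2_eq_norm, WithLp.toLp_sub]
  exact abs_norm_sub_norm_le _ _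

lemma abs_ip_le {n : ℕ} (x y : Fin n → ℝ) : |ip x y| ≤ l2 x * l2 y := by
  refine abs_le_of_sq_le_sq ?_ (mul_nonneg (l2_nonneg _) (l2_nonneg _))
  rw [mul_pow, l2_sq, l2_sq]
  exact Finset.sum_mul_sq_le_sq_mul_sq _ _ _

lemma ip_add {n : ℕ} (φ x y : Fin n → ℝ) : ip φ (x + y) = ip φ x + ip φ y := by
  simp [ip, mul_add, Finset.sum_add_distrib]

lemma ip_smul {n : ℕ} (a : ℝ) (φ x : Fin n → ℝ) : ip φ (a • x) = a * ip φ x := by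
  simp only [ip, Pi.smul_apply, smul_eq_mul, Finset.mul_sum]
  exact Finset.sum_congr rfl fun _ _ => by ring

lemma sparse_smul {n K : ℕ} {x : Fin n → ℝ} (hx : sparse K x) (a : ℝ) : sparse K (a • x) := by
  refine le_trans (Finset.card_le_card fun i hi => ?_) hx
  simp only [Finset.mem_filter, Finset.mem_univ, true_and, Pi.smul_apply, smul_eq_mul] at hi ⊢
  exact right_ne_zero_of_mul hi

/-! ### A finite net of the sparse unit ball -/

/-- `T` is an `ε`-net of the `K`-sparse Euclidean unit ball, where the difference between a vector and
its approximation is required to be `K`-sparse as well. -/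
def IsSparseNet {n : ℕ} (K : ℕ) (ε : ℝ) (T : Finset (Fin n → ℝ)) : Prop :=
  ∀ x, sparse K x → l2 x ≤ 1 → ∃ y ∈ T, sparse K (x - y) ∧ l2 (x - y) ≤ ε

/-- Rounding towards zero. -/
noncomputable def roundToZero (x : ℝ) : ℤ := if 0 ≤ x then ⌊x⌋ else ⌈x⌉

lemma roundToZero_zero : roundToZero 0 = 0 := by simp [roundToZero]

lemma abs_roundToZero_le (x : ℝ) : |(roundToZero x : ℝ)| ≤ |x| := by
  unfold roundToZero
  split_ifs with h
  · rw [abs_of_nonneg h, abs_of_nonneg (by exact_mod_cast Int.floor_nonneg.2 h)]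
    exact Int.floor_le x
  · push Not at h
    have h1 : ⌈x⌉ ≤ 0 := Int.ceil_le.2 (by simpa using h.le)
    have h2 : (⌈x⌉ : ℝ) ≤ 0 := by exact_mod_cast h1
    rw [abs_of_neg h, abs_of_nonpos h2]
    linarith [Int.le_ceil x]

lemma abs_sub_roundToZero_le (x : ℝ) : |x - roundToZero x| ≤ 1 := by
  unfold roundToZero
  rw [abs_le]
  split_ifs
  · constructor <;> linarith [Int.floor_le x, Int.lt_floor_add_one x]
  · constructor <;> linarith [Int.le_ceil x, Int.ceil_lt_add_one x]

/-- The weight of an integer in the generating function that counts sparse integer vectors: a factor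
`q` for being nonzero, and `2^(-|a|)` for the absolute value. -/
noncomputable def gridWeight (q : ℝ) (a : ℤ) : ℝ := (if a = 0 then 1 else q) * (1 / 2) ^ a.natAbs

lemma sum_gridWeight {q : ℝ} (L : ℕ) :
    ∑ a ∈ Finset.Icc (-(L : ℤ)) L, gridWeight q a = 1 + 2 * q * (1 - (1 / 2) ^ L) := by
  induction L with
  | zero => simp [gridWeight]
  | succ L ih =>
    have h : Finset.Icc (-((L + 1 : ℕ) : ℤ)) ((L + 1 : ℕ) : ℤ)
        = insert ((L + 1 : ℕ) : ℤ) (insert (-((L + 1 : ℕ) : ℤ)) (Finset.Icc (-(L : ℤ)) L)) := by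
      ext a; simp only [Finset.mem_Icc, Finset.mem_insert]; omega
    rw [h, Finset.sum_insert (by simp; omega), Finset.sum_insert (by simp), ih]
    have h1 : gridWeight q ((L + 1 : ℕ) : ℤ) = q * (1 / 2) ^ (L + 1) := by
      unfold gridWeight
      rw [if_neg (by omega), Int.natAbs_natCast]
    have h2 : gridWeight q (-((L + 1 : ℕ) : ℤ)) = q * (1 / 2) ^ (L + 1) := by
      unfold gridWeight
      rw [if_neg (by omega), Int.natAbs_neg, Int.natAbs_natCast]
    rw [h1, h2]
    ring

/-- The integer vectors of length `N` with at most `K` nonzero entries and `ℓ¹` norm at most `L`. The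
ambient box only serves to make the set finite, see `mem_gridSet`. -/
noncomputable def gridSet (N K L : ℕ) : Finset (Fin N → ℤ) :=
  (Fintype.piFinset fun _ : Fin N => Finset.Icc (-(L : ℤ)) L).filter fun z =>
    ∑ i, (z i).natAbs ≤ L ∧ (Finset.univ.filter fun i => z i ≠ 0).card ≤ K

lemma mem_gridSet {N K L : ℕ} {z : Fin N → ℤ} :
    z ∈ gridSet N K L ↔
      ∑ i, (z i).natAbs ≤ L ∧ (Finset.univ.filter fun i => z i ≠ 0).card ≤ K := by
  unfold gridSet
  simp only [Finset.mem_filter, Fintype.mem_piFinset, Finset.mem_Icc, and_iff_right_iff_imp]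
  rintro ⟨h, -⟩ i
  have := Finset.single_le_sum (f := fun i => (z i).natAbs) (fun _ _ => Nat.zero_le _)
    (Finset.mem_univ i)
  omega

/-- With `q = K/N`, every vector of `gridSet N K L` has product weight at least `q^K 2^(-L)`, while the
total weight of the box is at most `(1 + 2q)^N ≤ exp (2K)`. -/
lemma card_gridSet_le {N K L : ℕ} (hK : 0 < K) (hKN : K ≤ N) :
    ((gridSet N K L).card : ℝ) ≤ 2 ^ L * ((N : ℝ) / K) ^ K * Real.exp (2 * K) := by
  have hK' : (0 : ℝ) < K := by exact_mod_cast hK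
  have hKN' : (K : ℝ) ≤ N := by exact_mod_cast hKN
  have hN' : (0 : ℝ) < N := hK'.trans_le hKN'
  set q : ℝ := K / N with hq
  have hq0 : 0 < q := by positivity
  have hq1 : q ≤ 1 := by rw [hq, div_le_one hN']; exact hKN'
  have hnn : ∀ a, 0 ≤ gridWeight q a := fun a => by
    unfold gridWeight; split_ifs <;> positivity
  have hlow : ∀ z ∈ gridSet N K L, q ^ K * (1 / 2) ^ L ≤ ∏ i, gridWeight q (z i) := by
    intro z hz
    obtain ⟨h1, h2⟩ := mem_gridSet.1 hz
    unfold gridWeight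
    rw [Finset.prod_mul_distrib, Finset.prod_pow_eq_pow_sum]
    have h3 : ∏ i, (if z i = 0 then (1 : ℝ) else q)
        = q ^ (Finset.univ.filter fun i => z i ≠ 0).card := by
      rw [Finset.prod_ite]; simp
    rw [h3]
    exact mul_le_mul (pow_le_pow_of_le_one hq0.le hq1 h2)
      (pow_le_pow_of_le_one (by norm_num) (by norm_num) h1) (by positivity) (by positivity)
  have hsum : ((gridSet N K L).card : ℝ) * (q ^ K * (1 / 2) ^ L) ≤ Real.exp (2 * K) := by
    calc ((gridSet N K L).card : ℝ) * (q ^ K * (1 / 2) ^ L)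
        ≤ ∑ z ∈ gridSet N K L, ∏ i, gridWeight q (z i) := by
          rw [← nsmul_eq_mul]; exact Finset.card_nsmul_le_sum _ _ _ hlow
      _ ≤ ∑ z ∈ Fintype.piFinset fun _ : Fin N => Finset.Icc (-(L : ℤ)) L,
            ∏ i, gridWeight q (z i) :=
          Finset.sum_le_sum_of_subset_of_nonneg (Finset.filter_subset _ _)
            fun z _ _ => Finset.prod_nonneg fun i _ => hnn _
      _ = (1 + 2 * q * (1 - (1 / 2) ^ L)) ^ N := by
          rw [← Finset.prod_univ_sum]
          simp only [sum_gridWeight, Finset.prod_const, Finset.card_univ, Fintype.card_fin]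
      _ ≤ Real.exp (2 * q) ^ N := by
          have hp : (0 : ℝ) < (1 / 2) ^ L := by positivity
          have hp1 : ((1 : ℝ) / 2) ^ L ≤ 1 := pow_le_one₀ (by norm_num) (by norm_num)
          refine pow_le_pow_left₀ (by nlinarith) ?_ N
          have := Real.add_one_le_exp (2 * q)
          nlinarith
      _ = Real.exp (2 * K) := by
          rw [← Real.exp_nat_mul]
          congr 1
          rw [hq]; field_simp
  have hpos : 0 < q ^ K * (1 / 2) ^ L := by positivity
  rw [← le_div_iff₀ hpos] at hsum
  refine hsum.trans (le_of_eq ?_)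
  rw [hq, div_pow, div_pow, div_pow, one_pow]
  field_simp

/-- The net of the `K`-sparse unit ball given by the lattice `(ε/√K)ℤᴺ`. Each vector and the net point
close to it differ by a `K`-sparse vector. -/
lemma exists_net {N K : ℕ} (hK : 0 < K) (hKN : K ≤ N) {ε : ℝ} (hε : 0 < ε) :
    ∃ T : Finset (Fin N → ℝ),
      (T.card : ℝ) ≤ Real.exp (K / ε * Real.log 2 + K * Real.log (N / K) + 2 * K) ∧
      (∀ y ∈ T, l2 y ≤ 1) ∧ IsSparseNet K ε T := by
  have hK' : (0 : ℝ) < K := by exact_mod_cast hK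
  have hN' : (0 : ℝ) < N := by exact_mod_cast hK.trans_le hKN
  have hsK : 0 < √(K : ℝ) := Real.sqrt_pos.2 hK'
  have hsq : √(K : ℝ) ^ 2 = K := Real.sq_sqrt hK'.le
  set h : ℝ := ε / √K with hh
  have hh0 : 0 < h := by positivity
  set L : ℕ := ⌊(K : ℝ) / ε⌋₊ with hL
  let G := gridSet N K L
  refine ⟨(G.image fun z i => h * (z i : ℝ)).filter fun y => l2 y ≤ 1, ?_, ?_, ?_⟩
  · calc ((((G.image fun z i => h * (z i : ℝ)).filter fun y => l2 y ≤ 1).card : ℕ) : ℝ)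
        ≤ G.card := by
          exact_mod_cast (Finset.card_filter_le _ _).trans Finset.card_image_le
      _ ≤ 2 ^ L * ((N : ℝ) / K) ^ K * Real.exp (2 * K) := card_gridSet_le hK hKN
      _ ≤ Real.exp (K / ε * Real.log 2) * Real.exp (K * Real.log (N / K))
            * Real.exp (2 * K) := by
          have e1 : (2 : ℝ) ^ L ≤ Real.exp (K / ε * Real.log 2) := by
            rw [← Real.exp_log (show (0 : ℝ) < 2 by norm_num), ← Real.exp_nat_mul,
              Real.exp_log (show (0 : ℝ) < 2 by norm_num)]
            have : (L : ℝ) ≤ K / ε := Nat.floor_le (by positivity)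
            gcongr
          have e2 : ((N : ℝ) / K) ^ K = Real.exp (K * Real.log (N / K)) := by
            rw [Real.exp_nat_mul, Real.exp_log (by positivity)]
          rw [e2]
          gcongr
      _ = _ := by rw [← Real.exp_add, ← Real.exp_add]
  · intro y hy
    exact (Finset.mem_filter.1 hy).2
  · intro x hx hx1
    set z : Fin N → ℤ := fun i => roundToZero (x i / h) with hz
    have hz0 : ∀ i, x i = 0 → z i = 0 := fun i hi => by
      simp only [hz, hi, zero_div, roundToZero_zero]
    have hzle : ∀ i, |h * (z i : ℝ)| ≤ |x i| := fun i => by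
      have := abs_roundToZero_le (x i / h)
      rw [abs_div, abs_of_pos hh0, le_div_iff₀ hh0] at this
      rw [abs_mul, abs_of_pos hh0, mul_comm]
      exact this
    have hdist : ∀ i, |x i - h * (z i : ℝ)| ≤ h := fun i => by
      have := abs_sub_roundToZero_le (x i / h)
      have e : x i - h * (z i : ℝ) = h * (x i / h - roundToZero (x i / h)) := by
        simp only [hz]; field_simp
      rw [e, abs_mul, abs_of_pos hh0]
      nlinarith
    set S := Finset.univ.filter fun i => x i ≠ 0 with hS
    have hSK : (S.card : ℝ) ≤ K := by exact_mod_cast hx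
    have hxs : ∑ i, x i ^ 2 ≤ 1 := by
      rw [← l2_sq]; nlinarith [l2_nonneg x]
    -- Cauchy–Schwarz on the support of `x`
    have hl1 : ∑ i, |x i| ≤ √K := by
      have h1 : ∑ i, |x i| = ∑ i ∈ S, |x i| := by
        rw [hS, Finset.sum_filter]
        refine Finset.sum_congr rfl fun i _ => ?_
        split_ifs with h
        · rfl
        · push Not at h; simp [h]
      rw [h1]
      refine Real.le_sqrt_of_sq_le ?_
      have h2 := sq_sum_le_card_mul_sum_sq (s := S) (f := fun i => |x i|)
      have h3 : ∑ i ∈ S, |x i| ^ 2 ≤ 1 := by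
        simp only [sq_abs]
        exact (Finset.sum_le_sum_of_subset_of_nonneg (Finset.subset_univ _)
          fun _ _ _ => sq_nonneg _).trans hxs
      have h4 : (0 : ℝ) ≤ S.card := Nat.cast_nonneg _
      nlinarith
    have hzG : z ∈ G := by
      refine mem_gridSet.2 ⟨?_, ?_⟩
      · refine Nat.le_floor ?_
        have h1 : h * ∑ i, ((z i).natAbs : ℝ) ≤ √K := by
          refine le_trans ?_ hl1
          rw [Finset.mul_sum]
          refine Finset.sum_le_sum fun i _ => ?_
          have := hzle i
          rw [abs_mul, abs_of_pos hh0] at this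
          rwa [Nat.cast_natAbs, Int.cast_abs]
        push_cast [Nat.cast_natAbs] at h1 ⊢
        rw [le_div_iff₀ hε]
        have e : ε = h * √K := by rw [hh]; field_simp
        rw [e]
        nlinarith
      · refine le_trans (Finset.card_le_card fun i hi => ?_) hx
        simp only [Finset.mem_filter, Finset.mem_univ, true_and] at hi ⊢
        exact fun h => hi (hz0 i h)
    refine ⟨fun i => h * (z i : ℝ), Finset.mem_filter.2 ⟨Finset.mem_image_of_mem _ hzG, ?_⟩,
      ?_, ?_⟩
    · refine le_trans (Real.sqrt_le_sqrt (Finset.sum_le_sum fun i _ => ?_)) hx1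
      exact sq_le_sq.2 (hzle i)
    · refine le_trans (Finset.card_le_card fun i hi => ?_) hx
      simp only [Finset.mem_filter, Finset.mem_univ, true_and, Pi.sub_apply] at hi ⊢
      intro h0
      exact hi (by rw [h0, hz0 i h0]; simp)
    · refine Real.sqrt_le_iff.2 ⟨hε.le, ?_⟩
      have h1 : ∑ i, (x - fun i => h * (z i : ℝ)) i ^ 2 ≤ ∑ i ∈ S, h ^ 2 := by
        rw [hS, Finset.sum_filter]
        refine Finset.sum_le_sum fun i _ => ?_
        simp only [Pi.sub_apply]
        split_ifs with h'
        · rw [← sq_abs]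
          exact pow_le_pow_left₀ (abs_nonneg _) (hdist i) 2
        · push Not at h'
          rw [h', hz0 i h']; simp
      refine h1.trans ?_
      rw [Finset.sum_const, nsmul_eq_mul]
      calc (S.card : ℝ) * h ^ 2 ≤ K * h ^ 2 := by gcongr
        _ = ε ^ 2 := by rw [hh, div_pow, hsq]; field_simp

/-! ### The empirical `ℓ¹` norm -/

/-- The normalized empirical norm `(1/M)‖Φx‖₁`. -/
noncomputable def avgAbs {M n : ℕ} (Φ : Fin M → Fin n → ℝ) (x : Fin n → ℝ) : ℝ :=
  (1 / (M : ℝ)) * ∑ j, |ip (Φ j) x|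

lemma avgAbs_add_le {M n : ℕ} (Φ : Fin M → Fin n → ℝ) (x y : Fin n → ℝ) :
    avgAbs Φ (x + y) ≤ avgAbs Φ x + avgAbs Φ y := by
  unfold avgAbs
  rw [← mul_add, ← Finset.sum_add_distrib]
  gcongr with j
  rw [ip_add]
  exact abs_add_le _ _

lemma avgAbs_smul {M n : ℕ} (Φ : Fin M → Fin n → ℝ) (a : ℝ) (x : Fin n → ℝ) :
    avgAbs Φ (a • x) = |a| * avgAbs Φ x := by
  unfold avgAbs
  simp only [ip_smul, abs_mul]
  rw [← Finset.mul_sum]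
  ring

lemma abs_avgAbs_sub_le {M n : ℕ} (Φ : Fin M → Fin n → ℝ) (x y : Fin n → ℝ) :
    |avgAbs Φ x - avgAbs Φ y| ≤ avgAbs Φ (x - y) := by
  have h1 := avgAbs_add_le Φ (x - y) y
  have h2 := avgAbs_add_le Φ (y - x) x
  have h3 := avgAbs_smul Φ (-1) (x - y)
  rw [show (-1 : ℝ) • (x - y) = y - x by simp, abs_neg, abs_one, one_mul] at h3
  rw [sub_add_cancel] at h1 h2
  rw [abs_le]
  constructor <;> linarith

/-- A bound on a net with `ε ≤ 1/2` gives a bound on all sparse vectors: the supremum `s` of `avgAbs Φ`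
over the sparse unit ball is finite and satisfies `s ≤ 2 + s/2`. -/
lemma avgAbs_le {M n K : ℕ} {Φ : Fin M → Fin n → ℝ} {T : Finset (Fin n → ℝ)} {ε : ℝ}
    (hε : ε ≤ 1 / 2) (hT : IsSparseNet K ε T) (hΦ : ∀ y ∈ T, avgAbs Φ y ≤ 2)
    {x : Fin n → ℝ} (hx : sparse K x) : avgAbs Φ x ≤ 4 * l2 x := by
  set S : Set ℝ := {r | ∃ y, sparse K y ∧ l2 y ≤ 1 ∧ avgAbs Φ y = r} with hS
  have hbdd : BddAbove S := by
    refine ⟨(1 / (M : ℝ)) * ∑ j, l2 (Φ j), ?_⟩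
    rintro r ⟨y, -, hy, rfl⟩
    unfold avgAbs
    gcongr with j
    refine (abs_ip_le _ _).trans ?_
    exact mul_le_of_le_one_right (l2_nonneg _) hy
  have hscale : ∀ y, sparse K y → ∀ r : ℝ, 0 < r → l2 y ≤ r → avgAbs Φ y ≤ r * sSup S := by
    intro y hy r hr hyr
    have h1 : avgAbs Φ (r⁻¹ • y) ≤ sSup S := by
      refine le_csSup hbdd ⟨_, sparse_smul hy _, ?_, rfl⟩
      rw [l2_smul, abs_of_pos (inv_pos.2 hr), inv_mul_le_iff₀ hr]
      linarith
    rwa [avgAbs_smul, abs_of_pos (inv_pos.2 hr), inv_mul_le_iff₀ hr] at h1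
  have hne : S.Nonempty := ⟨_, 0, by simp [sparse, l0], by simp [l2], rfl⟩
  have hsup : sSup S ≤ 4 := by
    have : sSup S ≤ 2 + 1 / 2 * sSup S := by
      refine csSup_le hne ?_
      rintro r ⟨y, hy, hy1, rfl⟩
      obtain ⟨y', hy'T, hs, hd⟩ := hT y hy hy1
      have h1 := avgAbs_add_le Φ y' (y - y')
      rw [add_sub_cancel] at h1
      have h2 := hscale _ hs (1 / 2) (by norm_num) (hd.trans hε)
      linarith [hΦ y' hy'T]
    linarith
  rcases (l2_nonneg x).eq_or_lt with h0 | h0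
  · -- here `x` has norm zero, and every positive multiple of `sSup S` bounds `avgAbs Φ x`
    refine le_of_forall_pos_le_add fun r hr => ?_
    have := hscale x hx (r / 4) (by positivity) (by rw [← h0]; positivity)
    rw [← h0]
    nlinarith
  · have := hscale x hx (l2 x) h0 le_rfl
    nlinarith

/-- The deviation of `(1/M)‖Φx‖₁` from its expectation `√(2/π)‖x‖₂`. -/
noncomputable def dev {M n : ℕ} (Φ : Fin M → Fin n → ℝ) (x : Fin n → ℝ) : ℝ :=
  avgAbs Φ x - √(2 / π) * l2 x

lemma abs_dev_sub_le {M n : ℕ} (Φ : Fin M → Fin n → ℝ) (x y : Fin n → ℝ) :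
    |dev Φ x - dev Φ y| ≤ avgAbs Φ (x - y) + l2 (x - y) := by
  have h1 := abs_avgAbs_sub_le Φ x y
  have h2 := abs_l2_sub_le x y
  have h3 : |√(2 / π) * (l2 x - l2 y)| ≤ l2 (x - y) := by
    rw [abs_mul, abs_of_nonneg (Real.sqrt_nonneg _)]
    nlinarith [abs_nonneg (l2 x - l2 y), sqrt_two_div_pi_le_one, Real.sqrt_nonneg (2 / π)]
  have : dev Φ x - dev Φ y = (avgAbs Φ x - avgAbs Φ y) - √(2 / π) * (l2 x - l2 y) := by
    unfold dev; ring
  rw [this]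
  exact (abs_sub _ _).trans (add_le_add h1 h3)

/-- `sgn a` is a subgradient of the absolute value at `a`, also at `a = 0`. -/
lemma sgn_mul_le_s2 (a b : ℝ) : sgn a * b ≤ |a + b| - |a| := by
  unfold sgn
  split_ifs with h
  · rw [abs_of_pos h]; linarith [le_abs_self (a + b)]
  · push Not at h
    rw [abs_of_nonpos h]; linarith [neg_abs_le (a + b)]

lemma sgn_mul_pos {a : ℝ} (ha : 0 < a) (b : ℝ) : sgn (a * b) = sgn b := by
  unfold sgn
  simp only [mul_pos_iff_of_pos_left ha]

/-! ### The deterministic part -/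

/-- The event on the finite net `T` that implies the theorem: the empirical norms, their increments in
a direction of length of order `δ`, and the empirical means of the linear forms are all close to
their expectations. -/
structure GoodMatrix {M n : ℕ} (Φ : Fin M → Fin n → ℝ) (T : Finset (Fin n → ℝ)) (δ : ℝ) :
    Prop where
  norm_dev : ∀ x ∈ T, |dev Φ x| ≤ δ / 4
  incr_dev : ∀ x ∈ T, ∀ y ∈ T, |dev Φ (x + δ • y) - dev Φ x| ≤ δ * (δ / 4)
  mean_dev : ∀ y ∈ T, |(1 / (M : ℝ)) * ∑ j, ip (Φ j) y| ≤ δ / 4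

section Deterministic

variable {M n K : ℕ} {Φ : Fin M → Fin n → ℝ} {T : Finset (Fin n → ℝ)} {δ : ℝ}

lemma GoodMatrix.avgAbs_le (hΦ : GoodMatrix Φ T δ) (h0 : 0 < δ) (h1 : δ ≤ 1)
    (hT : IsSparseNet K (δ ^ 2 / 60) T) (hT1 : ∀ y ∈ T, l2 y ≤ 1)
    {x : Fin n → ℝ} (hx : sparse K x) : avgAbs Φ x ≤ 4 * l2 x := by
  refine _root_.avgAbs_le (by nlinarith) hT (fun y hy => ?_) hx
  have h2 := (abs_le.1 (hΦ.norm_dev y hy)).2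
  have h3 := hT1 y hy
  unfold dev at h2
  nlinarith [l2_nonneg y, sqrt_two_div_pi_le_one, Real.sqrt_nonneg (2 / π)]

lemma GoodMatrix.abs_dev_le (hΦ : GoodMatrix Φ T δ) (h0 : 0 < δ) (h1 : δ ≤ 1)
    (hT : IsSparseNet K (δ ^ 2 / 60) T) (hT1 : ∀ y ∈ T, l2 y ≤ 1)
    {x : Fin n → ℝ} (hx : sparse K x) (hx1 : l2 x = 1) : |dev Φ x| ≤ δ := by
  obtain ⟨y, hy, hs, hd⟩ := hT x hx hx1.le
  have h2 := abs_dev_sub_le Φ x y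
  have h3 := hΦ.avgAbs_le h0 h1 hT hT1 hs
  have h4 := hΦ.norm_dev y hy
  have h5 := abs_add_le (dev Φ x - dev Φ y) (dev Φ y)
  rw [sub_add_cancel] at h5
  nlinarith

/-- The one-sided form of (ii) for unit vectors. The error `δ²` splits into `δ²/4` from the net points,
`δ²/4` from the approximation of `u` and `v` in the net, and `δ²/2` from the growth of the norm. -/
lemma GoodMatrix.sgn_le (hΦ : GoodMatrix Φ T δ) (h0 : 0 < δ) (h1 : δ ≤ 1)
    (hT : IsSparseNet K (δ ^ 2 / 60) T) (hT1 : ∀ y ∈ T, l2 y ≤ 1)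
    {u v : Fin n → ℝ} (hu : sparse K u) (hu1 : l2 u = 1) (hv : sparse K v) (hv1 : l2 v = 1)
    (huv : ip u v = 0) :
    (1 / (M : ℝ)) * ∑ j, sgn (ip (Φ j) u) * ip (Φ j) v ≤ δ := by
  -- convexity: `sgn (Φ u)` is a subgradient of the `ℓ¹` norm at `Φ u`
  have hsub : δ * ((1 / (M : ℝ)) * ∑ j, sgn (ip (Φ j) u) * ip (Φ j) v)
      ≤ avgAbs Φ (u + δ • v) - avgAbs Φ u := by
    unfold avgAbs
    rw [← mul_sub, ← Finset.sum_sub_distrib, mul_left_comm, Finset.mul_sum]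
    gcongr with j
    rw [ip_add, ip_smul]
    refine le_trans (le_of_eq ?_) (sgn_mul_le_s2 _ _)
    ring
  obtain ⟨u', hu', hus, hud⟩ := hT u hu hu1.le
  obtain ⟨v', hv', hvs, hvd⟩ := hT v hv hv1.le
  have hfu := hΦ.avgAbs_le h0 h1 hT hT1 hus
  have hfv := hΦ.avgAbs_le h0 h1 hT hT1 hvs
  have hA := abs_dev_sub_le Φ u u'
  have hB := abs_dev_sub_le Φ (u + δ • v) (u' + δ • v')
  have hsplit : u + δ • v - (u' + δ • v') = (u - u') + δ • (v - v') := by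
    rw [smul_sub]; abel
  rw [hsplit] at hB
  have hB1 := avgAbs_add_le Φ (u - u') (δ • (v - v'))
  have hB2 := l2_add_le_s2 (u - u') (δ • (v - v'))
  rw [avgAbs_smul, abs_of_pos h0] at hB1
  rw [l2_smul, abs_of_pos h0] at hB2
  have hC := hΦ.incr_dev u' hu' v' hv'
  have hδ2 := sq_nonneg (δ ^ 2)
  -- orthogonality: `‖u + δ v‖ = √(1 + δ²) ≤ 1 + δ² / 2`
  have hnorm : l2 (u + δ • v) ≤ 1 + δ ^ 2 / 2 := by
    refine Real.sqrt_le_iff.2 ⟨by positivity, ?_⟩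
    have hu2 := l2_sq u
    have hv2 := l2_sq v
    have : ∑ i, (u + δ • v) i ^ 2 = l2 u ^ 2 + 2 * δ * ip u v + δ ^ 2 * l2 v ^ 2 := by
      rw [hu2, hv2, ip, Finset.mul_sum, Finset.mul_sum, ← Finset.sum_add_distrib,
        ← Finset.sum_add_distrib]
      refine Finset.sum_congr rfl fun i _ => ?_
      simp only [Pi.add_apply, Pi.smul_apply, smul_eq_mul]
      ring
    rw [this, hu1, hv1, huv]
    nlinarith
  have hincr : dev Φ (u + δ • v) - dev Φ u
      = avgAbs Φ (u + δ • v) - avgAbs Φ u - √(2 / π) * (l2 (u + δ • v) - 1) := by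
    unfold dev; rw [hu1]; ring
  have hk : √(2 / π) * (l2 (u + δ • v) - 1) ≤ δ ^ 2 / 2 := by
    have := Real.sqrt_nonneg (2 / π)
    calc √(2 / π) * (l2 (u + δ • v) - 1) ≤ √(2 / π) * (δ ^ 2 / 2) := by gcongr; linarith
      _ ≤ 1 * (δ ^ 2 / 2) := by gcongr; exact sqrt_two_div_pi_le_one
      _ = _ := one_mul _
  have hA' := (abs_le.1 hA).1
  have hB' := (abs_le.1 hB).2
  have hC' := (abs_le.1 hC).2
  have hδv : δ * l2 (v - v') ≤ δ ^ 2 / 60 := by nlinarith [l2_nonneg (v - v')]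
  have hδf : δ * avgAbs Φ (v - v') ≤ 4 * (δ ^ 2 / 60) := by nlinarith
  refine le_of_mul_le_mul_left ?_ h0
  nlinarith

/-- The bound used for (ii) when `u = 0`. -/
lemma GoodMatrix.mean_le (hΦ : GoodMatrix Φ T δ) (h0 : 0 < δ) (h1 : δ ≤ 1)
    (hT : IsSparseNet K (δ ^ 2 / 60) T) (hT1 : ∀ y ∈ T, l2 y ≤ 1)
    {v : Fin n → ℝ} (hv : sparse K v) (hv1 : l2 v = 1) :
    |(1 / (M : ℝ)) * ∑ j, ip (Φ j) v| ≤ δ := by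
  obtain ⟨y, hy, hs, hd⟩ := hT v hv hv1.le
  have h2 := hΦ.avgAbs_le h0 h1 hT hT1 hs
  have h3 := hΦ.mean_dev y hy
  have h4 : |(1 / (M : ℝ)) * ∑ j, ip (Φ j) (v - y)| ≤ avgAbs Φ (v - y) := by
    rw [abs_mul, abs_of_nonneg (by positivity)]
    unfold avgAbs
    gcongr
    exact Finset.abs_sum_le_sum_abs _ _
  have h5 : (1 / (M : ℝ)) * ∑ j, ip (Φ j) v
      = (1 / (M : ℝ)) * ∑ j, ip (Φ j) y + (1 / (M : ℝ)) * ∑ j, ip (Φ j) (v - y) := by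
    rw [← mul_add, ← Finset.sum_add_distrib]
    simp only [← ip_add, add_sub_cancel]
  rw [h5]
  refine (abs_add_le _ _).trans ?_
  nlinarith

lemma eq_zero_of_l2_eq_zero {x : Fin n → ℝ} (h : l2 x = 0) : x = 0 := by
  rw [l2_eq_norm, norm_eq_zero] at h
  simpa using h

lemma GoodMatrix.conclusion (hΦ : GoodMatrix Φ T δ) (h0 : 0 < δ) (h1 : δ ≤ 1)
    (hT : IsSparseNet K (δ ^ 2 / 60) T) (hT1 : ∀ y ∈ T, l2 y ≤ 1)
    (u v : Fin n → ℝ) (hu : sparse K u) (hv : sparse K v) (huv : ip u v = 0) :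
    |dev Φ u| ≤ δ * l2 u ∧
    |(1 / (M : ℝ)) * ∑ j, sgn (ip (Φ j) u) * ip (Φ j) v| ≤ δ * l2 v := by
  have hnormed : ∀ x : Fin n → ℝ, 0 < l2 x → l2 ((l2 x)⁻¹ • x) = 1 := fun x hx => by
    rw [l2_smul, abs_of_pos (inv_pos.2 hx), inv_mul_cancel₀ hx.ne']
  have hback : ∀ x : Fin n → ℝ, 0 < l2 x → x = l2 x • ((l2 x)⁻¹ • x) := fun x hx => by
    rw [smul_smul, mul_inv_cancel₀ hx.ne', one_smul]
  constructor
  · rcases (l2_nonneg u).eq_or_lt with hu0 | hu0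
    · have := eq_zero_of_l2_eq_zero hu0.symm
      subst this
      simp [dev, avgAbs, ip, ← hu0]
    · have := hΦ.abs_dev_le h0 h1 hT hT1 (sparse_smul hu (l2 u)⁻¹) (hnormed u hu0)
      have e : dev Φ u = l2 u * dev Φ ((l2 u)⁻¹ • u) := by
        conv_lhs => rw [hback u hu0]
        unfold dev
        rw [avgAbs_smul, l2_smul, abs_of_pos hu0]; ring
      rw [e, abs_mul, abs_of_pos hu0, mul_comm]
      gcongr
  · rcases (l2_nonneg v).eq_or_lt with hv0 | hv0
    · have := eq_zero_of_l2_eq_zero hv0.symm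
      subst this
      simp [ip, ← hv0]
    set v' := (l2 v)⁻¹ • v with hv'
    have hvs : sparse K v' := sparse_smul hv _
    have hv1 : l2 v' = 1 := hnormed v hv0
    have e : (1 / (M : ℝ)) * ∑ j, sgn (ip (Φ j) u) * ip (Φ j) v
        = l2 v * ((1 / (M : ℝ)) * ∑ j, sgn (ip (Φ j) u) * ip (Φ j) v') := by
      have hsum : ∑ j, sgn (ip (Φ j) u) * ip (Φ j) v
          = l2 v * ∑ j, sgn (ip (Φ j) u) * ip (Φ j) v' := by
        rw [Finset.mul_sum]
        refine Finset.sum_congr rfl fun j _ => ?_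
        have hj : ip (Φ j) v = l2 v * ip (Φ j) v' := by
          rw [hv', ip_smul, mul_inv_cancel_left₀ hv0.ne']
        rw [hj]; ring
      rw [hsum]; ring
    rw [e, abs_mul, abs_of_pos hv0, mul_comm]
    refine mul_le_mul_of_nonneg_right ?_ hv0.le
    rcases (l2_nonneg u).eq_or_lt with hu0 | hu0
    · have := eq_zero_of_l2_eq_zero hu0.symm
      subst this
      -- `sgn 0 = -1`, so the correlation is minus the empirical mean
      have e2 : (1 / (M : ℝ)) * ∑ j, sgn (ip (Φ j) 0) * ip (Φ j) v'
          = -((1 / (M : ℝ)) * ∑ j, ip (Φ j) v') := by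
        have : ∀ j, sgn (ip (Φ j) 0) = -1 := fun j => by simp [ip, sgn]
        simp only [this, neg_one_mul, Finset.sum_neg_distrib, mul_neg]
      rw [e2, abs_neg]
      exact hΦ.mean_le h0 h1 hT hT1 hvs hv1
    · set u' := (l2 u)⁻¹ • u with hu'
      have hus : sparse K u' := sparse_smul hu _
      have hu1 : l2 u' = 1 := hnormed u hu0
      have hsg : ∀ j, sgn (ip (Φ j) u) = sgn (ip (Φ j) u') := fun j => by
        rw [hu', ip_smul, sgn_mul_pos (inv_pos.2 hu0)]
      simp only [hsg]
      have hip : ip u' v' = 0 := by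
        have : ip u v' = 0 := by rw [hv', ip_smul, huv, mul_zero]
        have e3 : ip u' v' = (l2 u)⁻¹ * ip u v' := by
          simp only [hu', ip, Pi.smul_apply, smul_eq_mul, Finset.mul_sum, mul_assoc]
        rw [e3, this, mul_zero]
      have hp := hΦ.sgn_le h0 h1 hT hT1 hus hu1 hvs hv1 hip
      have hm := hΦ.sgn_le h0 h1 hT hT1 hus hu1 (sparse_smul hvs (-1))
        (by rw [l2_smul, hv1]; simp) (by rw [ip_smul, hip, mul_zero])
      simp only [ip_smul, mul_neg, neg_one_mul, Finset.sum_neg_distrib] at hm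
      rw [abs_le]
      constructor <;> linarith

end Deterministic

/-! ### The probability estimate -/

/-- Union bound over the net and over its pairs. The increments are divided by `δ` so that they are
dominated by the linear form of the second vector of the pair. -/
lemma measure_not_good {M n : ℕ} (hM : 0 < M) {T : Finset (Fin n → ℝ)} {δ : ℝ} (h0 : 0 < δ)
    (h1 : δ ≤ 1) (hT1 : ∀ y ∈ T, l2 y ≤ 1) :
    (matMeasure M n).real {Φ | ¬ GoodMatrix Φ T δ}
      ≤ 6 * (T.card : ℝ) ^ 2 * Real.exp (-(δ ^ 2 * M / 384)) := by
  have hτ0 : 0 < δ / 4 := by positivity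
  have hτ1 : δ / 4 ≤ 1 := by linarith
  have habs : ∀ x : Fin n → ℝ, Measurable fun φ => |ip φ x| := fun x => (measurable_ip x).abs
  have hA := union_concentration hM T (fun x φ => |ip φ x|) id (fun x => √(2 / π) * l2 x)
    (fun x _ => habs x) hT1 (fun x _ φ => by simp) (fun x _ => integral_abs_ip x) hτ0 hτ1
  have hB := union_concentration hM (T ×ˢ T)
    (fun p φ => δ⁻¹ * (|ip φ (p.1 + δ • p.2)| - |ip φ p.1|)) (fun p => p.2)
    (fun p => δ⁻¹ * (√(2 / π) * l2 (p.1 + δ • p.2) - √(2 / π) * l2 p.1))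
    (fun p _ => ((habs _).sub (habs _)).const_mul _)
    (fun p hp => hT1 _ (Finset.mem_product.1 hp).2)
    (fun p _ φ => by
      rw [abs_mul, abs_of_pos (inv_pos.2 h0), inv_mul_le_iff₀ h0]
      refine (abs_abs_sub_abs_le _ _).trans ?_
      rw [ip_add, ip_smul, add_sub_cancel_left, abs_mul, abs_of_pos h0])
    (fun p _ => by
      rw [integral_const_mul, integral_sub (integrable_ip _).abs (integrable_ip _).abs,
        integral_abs_ip, integral_abs_ip]) hτ0 hτ1
  have hC := union_concentration hM T (fun x φ => ip φ x) id (fun _ => 0)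
    (fun x _ => measurable_ip x) hT1 (fun x _ φ => by simp) (fun x _ => integral_ip x) hτ0 hτ1
  have hexp : -((M : ℝ) * (δ / 4) ^ 2 / 24) = -(δ ^ 2 * M / 384) := by ring
  rw [hexp] at hA hB hC
  set A := {Φ : Fin M → Fin n → ℝ | ∃ x ∈ T,
    δ / 4 < |(1 / (M : ℝ)) * (∑ j, |ip (Φ j) x|) - √(2 / π) * l2 x|}
  set B := {Φ : Fin M → Fin n → ℝ | ∃ p ∈ T ×ˢ T, δ / 4 <
    |(1 / (M : ℝ)) * (∑ j, δ⁻¹ * (|ip (Φ j) (p.1 + δ • p.2)| - |ip (Φ j) p.1|))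
      - δ⁻¹ * (√(2 / π) * l2 (p.1 + δ • p.2) - √(2 / π) * l2 p.1)|}
  set D := {Φ : Fin M → Fin n → ℝ | ∃ x ∈ T, δ / 4 < |(1 / (M : ℝ)) * (∑ j, ip (Φ j) x) - 0|}
  have hsub : {Φ : Fin M → Fin n → ℝ | ¬ GoodMatrix Φ T δ} ⊆ A ∪ B ∪ D := by
    intro Φ hΦ
    by_contra hcon
    simp only [Set.mem_union, not_or] at hcon
    obtain ⟨⟨hnA, hnB⟩, hnD⟩ := hcon
    refine hΦ ⟨fun x hx => ?_, fun x hx y hy => ?_, fun y hy => ?_⟩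
    · by_contra h
      exact hnA ⟨x, hx, not_le.1 h⟩
    · by_contra h
      refine hnB ⟨(x, y), Finset.mem_product.2 ⟨hx, hy⟩, ?_⟩
      have e : (1 / (M : ℝ)) * (∑ j, δ⁻¹ * (|ip (Φ j) (x + δ • y)| - |ip (Φ j) x|))
          - δ⁻¹ * (√(2 / π) * l2 (x + δ • y) - √(2 / π) * l2 x)
          = δ⁻¹ * (dev Φ (x + δ • y) - dev Φ x) := by
        unfold dev avgAbs
        rw [← Finset.mul_sum, Finset.sum_sub_distrib]
        ring
      simp only
      rw [e, abs_mul, abs_of_pos (inv_pos.2 h0), lt_inv_mul_iff₀ h0]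
      exact not_le.1 h
    · by_contra h
      exact hnD ⟨y, hy, by rw [sub_zero]; exact not_le.1 h⟩
  have hcard : (T.card : ℝ) ≤ (T.card : ℝ) ^ 2 := by
    exact_mod_cast Nat.le_self_pow (by norm_num) T.card
  have hE := Real.exp_pos (-(δ ^ 2 * M / 384))
  rw [Finset.card_product, Nat.cast_mul] at hB
  calc _ ≤ _ := measureReal_mono hsub
    _ ≤ _ := (measureReal_union_le _ _).trans (add_le_add_left (measureReal_union_le _ _) _)
    _ ≤ _ := by nlinarith [mul_le_mul_of_nonneg_right hcard hE.le]

theorem gaussian_l1_sparse_embedding :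
    ∃ C c : ℝ, 0 < C ∧ 0 < c ∧
      ∀ (N M K : ℕ) (δ : ℝ), 0 < N → 0 < M → 0 < K → K ≤ N →
        δ ∈ Set.Ioc (0 : ℝ) 1 →
        C * δ⁻¹ ^ 6 * K * Real.log (2 * N / K) ≤ (M : ℝ) →
        ENNReal.ofReal (1 - 8 * Real.exp (-c * δ ^ 2 * M)) ≤
          (Measure.pi fun _ : Fin M => Measure.pi fun _ : Fin N => gaussianReal 0 1)
            {Φ : Fin M → Fin N → ℝ |
              ∀ u v : Fin N → ℝ, sparse K u → sparse K v → ip u v = 0 →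
                |(1 / (M : ℝ)) * l1 (Matrix.mulVec Φ u) - Real.sqrt (2 / Real.pi) * l2 u|
                    ≤ δ * l2 u ∧
                |(1 / (M : ℝ)) * ip (fun j => sgn (Matrix.mulVec Φ u j)) (Matrix.mulVec Φ v)|
                    ≤ δ * l2 v} := by
  refine ⟨100000, 1 / 768, by norm_num, by norm_num, ?_⟩
  intro N M K δ hN hM hK hKN hδ hMK
  obtain ⟨h0, h1⟩ := hδ
  obtain ⟨T, hTcard, hT1, hT⟩ := exists_net hK hKN (show (0 : ℝ) < δ ^ 2 / 60 by positivity)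
  have hbad := measure_not_good hM h0 h1 hT1
  have hK' : (1 : ℝ) ≤ K := by exact_mod_cast hK
  have hKN' : (K : ℝ) ≤ N := by exact_mod_cast hKN
  have hKpos : (0 : ℝ) < K := by linarith
  have hNpos : (0 : ℝ) < N := by linarith
  set ℓ := Real.log (2 * N / K) with hℓ
  have hl2 : Real.log 2 ≤ ℓ := by
    refine Real.log_le_log (by norm_num) ?_
    rw [le_div_iff₀ hKpos]; linarith
  have hlN : Real.log (N / K) ≤ ℓ := by
    refine Real.log_le_log (by positivity) ?_
    gcongr; linarith
  have hlog2 := Real.log_two_gt_d9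
  -- the cardinality of the net is at most `exp (64 K δ⁻² ℓ)`, which is at most
  -- `exp (δ² M / 1536)` by the lower bound on `M`
  have hexpo : K / (δ ^ 2 / 60) * Real.log 2 + K * Real.log (N / K) + 2 * K
      ≤ δ ^ 2 * M / 1536 := by
    have hi : 1 ≤ δ⁻¹ := (one_le_inv₀ h0).2 h1
    have hi2 : 1 ≤ δ⁻¹ ^ 2 := one_le_pow₀ hi
    have hKl : 0 ≤ K * ℓ := mul_nonneg hKpos.le (by linarith)
    have e1 : K / (δ ^ 2 / 60) * Real.log 2 ≤ 60 * δ⁻¹ ^ 2 * (K * ℓ) := by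
      have : K / (δ ^ 2 / 60) * Real.log 2 = 60 * δ⁻¹ ^ 2 * (K * Real.log 2) := by
        field_simp
      rw [this]
      gcongr
    have e2 : K * Real.log (N / K) ≤ δ⁻¹ ^ 2 * (K * ℓ) := by
      have : K * Real.log (N / K) ≤ K * ℓ := by gcongr
      nlinarith
    have e3 : 2 * (K : ℝ) ≤ 3 * δ⁻¹ ^ 2 * (K * ℓ) := by
      have : 2 * (K : ℝ) ≤ 3 * (K * ℓ) := by nlinarith
      nlinarith
    have e4 : 100000 * δ⁻¹ ^ 2 * (K * ℓ) ≤ δ ^ 2 * M := by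
      have h2 : 100000 * δ⁻¹ ^ 4 * (K * ℓ) ≤ δ ^ 2 * M := by
        calc 100000 * δ⁻¹ ^ 4 * (K * ℓ) = δ ^ 2 * (100000 * δ⁻¹ ^ 6 * K * ℓ) := by
              field_simp
          _ ≤ _ := by gcongr
      refine le_trans ?_ h2
      gcongr
      norm_num
    linarith [mul_nonneg (zero_le_one.trans hi2) hKl]
  have hprob : (matMeasure M N).real {Φ | ¬ GoodMatrix Φ T δ}
      ≤ 8 * Real.exp (-(1 / 768) * δ ^ 2 * M) := by
    refine hbad.trans ?_
    have hT2 : (T.card : ℝ) ^ 2 ≤ Real.exp (δ ^ 2 * M / 768) := by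
      calc (T.card : ℝ) ^ 2 ≤ Real.exp (δ ^ 2 * M / 1536) ^ 2 := by
            gcongr; exact hTcard.trans (Real.exp_le_exp.2 hexpo)
        _ = Real.exp (δ ^ 2 * M / 768) := by
            rw [← Real.exp_nat_mul]; congr 1; push_cast; ring
    calc 6 * (T.card : ℝ) ^ 2 * Real.exp (-(δ ^ 2 * M / 384))
        ≤ 6 * Real.exp (δ ^ 2 * M / 768) * Real.exp (-(δ ^ 2 * M / 384)) := by gcongr
      _ = 6 * Real.exp (-(1 / 768) * δ ^ 2 * M) := by
          rw [mul_assoc, ← Real.exp_add]; congr 2; ring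
      _ ≤ _ := by gcongr; norm_num
  refine le_trans ?_ (measure_mono (μ := matMeasure M N) (s := {Φ | GoodMatrix Φ T δ})
    fun Φ hΦ u v hu hv huv => GoodMatrix.conclusion hΦ h0 h1 hT hT1 u v hu hv huv)
  -- subadditivity on `good ∪ bad = univ` avoids any measurability question
  have hone : (1 : ℝ) ≤ (matMeasure M N).real {Φ | GoodMatrix Φ T δ}
      + (matMeasure M N).real {Φ | ¬ GoodMatrix Φ T δ} := by
    refine le_trans (le_of_eq ?_) (measureReal_union_le _ _)
    have : {Φ | GoodMatrix Φ T δ} ∪ {Φ : Fin M → Fin N → ℝ | ¬ GoodMatrix Φ T δ} = Set.univ := by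
      ext Φ; simp [em]
    rw [this, probReal_univ]
  refine ENNReal.ofReal_le_of_le_toReal ?_
  change _ ≤ (matMeasure M N).real _
  linarith
end

section
/- Let x, h ∈ ℝ^N with ‖x + h‖₁ ≤ ‖x‖₁, let K ≥ 1, and let T₀, T₁, …, T_L be pairwise disjoint subsets of {1,…,N} such that |T₀| = K, T₀ ∪ T₁ ∪ … ∪ T_L ⊇ supp(h), |T_k| = K for 1 ≤ k ≤ L−1, |T_L| ≤ K, and for every 1 ≤ k < L, every i ∈ T_k and every j ∈ T_{k+1} satisfy |h_i| ≥ |h_j|. Then ‖h‖₂ ≤ 2·‖h_{T₀ ∪ T₁}‖₂ + 2·e₀, where e₀ = ‖x_{T₀ᶜ}‖₁/√K and T₀ᶜ = {1,…,N} \ T₀. -/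
/-!
The standard block argument. Off `T 0 ∪ T 1`, every entry of `h` on the block `T (k + 1)` is at most
the average of `|h|` over the block `T k`, so the squared Euclidean norm of `h` on `T (k + 1)` is at
most `‖h_{T k}‖₁ ^ 2 / K`; summing over `k` bounds the Euclidean norm of the tail by
`‖h_{T₀ᶜ}‖₁ / √K` (`tail_sq_le`). The hypothesis `‖x + h‖₁ ≤ ‖x‖₁` gives the cone condition
`‖h_{T₀ᶜ}‖₁ ≤ ‖h_{T₀}‖₁ + 2 ‖x_{T₀ᶜ}‖₁` (`cone_condition`), and `‖h_{T₀}‖₁ ≤ √K ‖h_{T₀}‖₂` by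
Cauchy-Schwarz.
-/

open Finset MeasureTheory ProbabilityTheory Real

lemma sum_le_of_supp {N : ℕ} {f : Fin N → ℝ} {A B : Finset (Fin N)} (hf : ∀ i, 0 ≤ f i)
    (hAB : ∀ i ∈ A, f i ≠ 0 → i ∈ B) : ∑ i ∈ A, f i ≤ ∑ i ∈ B, f i := by
  rw [← Finset.sum_filter_ne_zero A]
  refine Finset.sum_le_sum_of_subset_of_nonneg (fun i hi => ?_) fun i _ _ => hf i
  rw [Finset.mem_filter] at hi
  exact hAB i hi.1 hi.2

/-- A block whose entries are dominated by those of a block of full size `K`: its squared Euclidean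
norm is controlled by the `ℓ1` norm of the dominating block. -/
lemma block_sq_le {N : ℕ} (h : Fin N → ℝ) (K : ℕ) (hK : 1 ≤ K) (A B : Finset (Fin N))
    (hA : A.card = K) (hB : B.card ≤ K) (hAB : ∀ i ∈ A, ∀ j ∈ B, |h j| ≤ |h i|) :
    ∑ j ∈ B, h j ^ 2 ≤ (∑ i ∈ A, |h i|) ^ 2 / K := by
  have hK0 : (0 : ℝ) < K := by exact_mod_cast hK
  set a := ∑ i ∈ A, |h i| with ha
  have hj : ∀ j ∈ B, h j ^ 2 ≤ (a / K) ^ 2 := by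
    intro j hj
    have h1 : (K : ℝ) * |h j| ≤ a := by
      have := Finset.card_nsmul_le_sum A (fun i => |h i|) |h j| (fun i hi => hAB i hi j hj)
      rwa [hA, nsmul_eq_mul] at this
    have h2 : |h j| ≤ a / K := by
      rw [le_div_iff₀ hK0]; linarith
    rw [← sq_abs]
    exact pow_le_pow_left₀ (abs_nonneg _) h2 2
  calc ∑ j ∈ B, h j ^ 2 ≤ B.card • (a / K) ^ 2 := Finset.sum_le_card_nsmul _ _ _ hj
    _ ≤ K * (a / K) ^ 2 := by
        rw [nsmul_eq_mul]
        have : (B.card : ℝ) ≤ K := by exact_mod_cast hB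
        gcongr
    _ = a ^ 2 / K := by field_simp

lemma tail_sq_le {N : ℕ} (h : Fin N → ℝ)
    (K : ℕ) (hK : 1 ≤ K) (L : ℕ) (T : ℕ → Finset (Fin N))
    (hdisj : ∀ k l, k ≤ L → l ≤ L → k ≠ l → Disjoint (T k) (T l))
    (hcover : ∀ i, h i ≠ 0 → ∃ k, k ≤ L ∧ i ∈ T k)
    (hcard : ∀ k, 1 ≤ k → k < L → (T k).card = K)
    (hcardL : (T L).card ≤ K)
    (hmono : ∀ k, 1 ≤ k → k < L → ∀ i ∈ T k, ∀ j ∈ T (k + 1), |h j| ≤ |h i|) :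
    ∑ i ∈ (T 0 ∪ T 1)ᶜ, h i ^ 2 ≤ (∑ i ∈ (T 0)ᶜ, |h i|) ^ 2 / K := by
  have hd1 : ((Finset.Ico 1 L : Finset ℕ) : Set ℕ).PairwiseDisjoint T := by
    intro k hk l hl hkl
    simp only [Finset.coe_Ico, Set.mem_Ico] at hk hl
    exact hdisj k l (by omega) (by omega) hkl
  have hd2 : ((Finset.Ico 1 L : Finset ℕ) : Set ℕ).PairwiseDisjoint (fun k => T (k + 1)) := by
    intro k hk l hl hkl
    simp only [Finset.coe_Ico, Set.mem_Ico] at hk hl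
    exact hdisj (k + 1) (l + 1) (by omega) (by omega) (by omega)
  have hsub : (Finset.Ico 1 L).biUnion T ⊆ (T 0)ᶜ := by
    intro i hi
    simp only [Finset.mem_biUnion, Finset.mem_Ico] at hi
    obtain ⟨k, hk, hik⟩ := hi
    rw [Finset.mem_compl]
    exact Finset.disjoint_left.mp (hdisj k 0 (by omega) (by omega) (by omega)) hik
  calc ∑ i ∈ (T 0 ∪ T 1)ᶜ, h i ^ 2
      ≤ ∑ i ∈ (Finset.Ico 1 L).biUnion (fun k => T (k + 1)), h i ^ 2 := by
        -- outside `T 0 ∪ T 1`, the support of `h` lies in the blocks `T 2, …, T L`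
        refine sum_le_of_supp (fun i => sq_nonneg _) fun i hi hne => ?_
        obtain ⟨k, hk, hik⟩ := hcover i fun h0 => hne (by rw [h0]; norm_num)
        simp only [Finset.mem_compl, Finset.mem_union, not_or] at hi
        have hk0 : k ≠ 0 := by rintro rfl; exact hi.1 hik
        have hk1 : k ≠ 1 := by rintro rfl; exact hi.2 hik
        simp only [Finset.mem_biUnion, Finset.mem_Ico]
        exact ⟨k - 1, by omega, by rwa [show k - 1 + 1 = k by omega]⟩
    _ = ∑ k ∈ Finset.Ico 1 L, ∑ i ∈ T (k + 1), h i ^ 2 := Finset.sum_biUnion hd2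
    _ ≤ ∑ k ∈ Finset.Ico 1 L, (∑ i ∈ T k, |h i|) ^ 2 / K := by
        refine Finset.sum_le_sum fun k hk => ?_
        rw [Finset.mem_Ico] at hk
        refine block_sq_le h K hK _ _ (hcard k hk.1 hk.2) ?_ (hmono k hk.1 hk.2)
        rcases Nat.lt_or_ge (k + 1) L with hlt | hge
        · exact (hcard (k + 1) (by omega) hlt).le
        · rwa [show k + 1 = L by omega]
    _ = (∑ k ∈ Finset.Ico 1 L, (∑ i ∈ T k, |h i|) ^ 2) / K := by rw [Finset.sum_div]
    _ ≤ (∑ k ∈ Finset.Ico 1 L, ∑ i ∈ T k, |h i|) ^ 2 / K := by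
        gcongr
        exact Finset.sum_sq_le_sq_sum_of_nonneg fun k _ => Finset.sum_nonneg fun i _ => abs_nonneg _
    _ = (∑ i ∈ (Finset.Ico 1 L).biUnion T, |h i|) ^ 2 / K := by rw [Finset.sum_biUnion hd1]
    _ ≤ (∑ i ∈ (T 0)ᶜ, |h i|) ^ 2 / K := by
        have := Finset.sum_le_sum_of_subset_of_nonneg hsub (fun i _ _ => abs_nonneg (h i))
        gcongr

lemma cone_condition {N : ℕ} (x h : Fin N → ℝ) (hxh : l1 (x + h) ≤ l1 x) (S : Finset (Fin N)) :
    ∑ i ∈ Sᶜ, |h i| ≤ ∑ i ∈ S, |h i| + 2 * ∑ i ∈ Sᶜ, |x i| := by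
  unfold l1 at hxh
  rw [← Finset.sum_add_sum_compl S, ← Finset.sum_add_sum_compl S (fun i => |x i|)] at hxh
  have h1 : ∑ i ∈ S, |x i| - ∑ i ∈ S, |h i| ≤ ∑ i ∈ S, |(x + h) i| := by
    rw [← Finset.sum_sub_distrib]
    refine Finset.sum_le_sum fun i _ => ?_
    have := abs_sub_abs_le_abs_sub (x i) (-h i)
    rwa [abs_neg, sub_neg_eq_add] at this
  have h2 : ∑ i ∈ Sᶜ, |h i| - ∑ i ∈ Sᶜ, |x i| ≤ ∑ i ∈ Sᶜ, |(x + h) i| := by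
    rw [← Finset.sum_sub_distrib]
    refine Finset.sum_le_sum fun i _ => ?_
    have := abs_sub_abs_le_abs_sub (h i) (-x i)
    rwa [abs_neg, sub_neg_eq_add, add_comm] at this
  linarith

theorem l2_le_head_plus_e0
    {N : ℕ} (x h : Fin N → ℝ) (hxh : l1 (x + h) ≤ l1 x)
    (K : ℕ) (hK : 1 ≤ K) (L : ℕ) (hL : 1 ≤ L) (T : ℕ → Finset (Fin N))
    (hdisj : ∀ k l, k ≤ L → l ≤ L → k ≠ l → Disjoint (T k) (T l))
    (hcard0 : (T 0).card = K)
    (hcover : ∀ i, h i ≠ 0 → ∃ k, k ≤ L ∧ i ∈ T k)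
    (hcard : ∀ k, 1 ≤ k → k < L → (T k).card = K)
    (hcardL : (T L).card ≤ K)
    (hmono : ∀ k, 1 ≤ k → k < L → ∀ i ∈ T k, ∀ j ∈ T (k + 1), |h j| ≤ |h i|) :
    l2 h ≤ 2 * l2 (restrict h (T 0 ∪ T 1)) + 2 * (l1 (restrict x ((T 0)ᶜ)) / Real.sqrt K) := by
  have hK0 : (0 : ℝ) < K := by exact_mod_cast hK
  have hsK : 0 < Real.sqrt K := Real.sqrt_pos.mpr hK0
  have hX : l1 (restrict x ((T 0)ᶜ)) = ∑ i ∈ (T 0)ᶜ, |x i| := by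
    simp only [l1, _root_.restrict, apply_ite abs, abs_zero, Finset.sum_ite_mem, Finset.univ_inter]
  have hA : l2 (restrict h (T 0 ∪ T 1)) = Real.sqrt (∑ i ∈ T 0 ∪ T 1, h i ^ 2) := by
    simp only [l2, _root_.restrict, ite_pow, ne_eq, OfNat.ofNat_ne_zero, not_false_eq_true, zero_pow,
      Finset.sum_ite_mem, Finset.univ_inter]
  have htail := tail_sq_le h K hK L T hdisj hcover hcard hcardL hmono
  have hcone := cone_condition x h hxh (T 0)
  rw [hX, hA, l2, ← Finset.sum_add_sum_compl (T 0 ∪ T 1)]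
  set A := ∑ i ∈ T 0 ∪ T 1, h i ^ 2
  set R := ∑ i ∈ (T 0 ∪ T 1)ᶜ, h i ^ 2
  set s := ∑ i ∈ (T 0)ᶜ, |h i|
  set X := ∑ i ∈ (T 0)ᶜ, |x i|
  have hA0 : 0 ≤ A := Finset.sum_nonneg fun i _ => sq_nonneg _
  have hs0 : 0 ≤ s := Finset.sum_nonneg fun i _ => abs_nonneg _
  have hhead : ∑ i ∈ T 0, |h i| ≤ Real.sqrt K * Real.sqrt A := by
    rw [← Real.sqrt_mul hK0.le]
    apply Real.le_sqrt_of_sq_le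
    calc (∑ i ∈ T 0, |h i|) ^ 2 ≤ (T 0).card * ∑ i ∈ T 0, |h i| ^ 2 := sq_sum_le_card_mul_sum_sq
      _ = K * ∑ i ∈ T 0, h i ^ 2 := by simp only [hcard0, sq_abs]
      _ ≤ K * A := by
          gcongr
          exact Finset.sum_le_sum_of_subset_of_nonneg Finset.subset_union_left
            fun i _ _ => sq_nonneg _
  have hR : Real.sqrt R ≤ s / Real.sqrt K := by
    refine (Real.sqrt_le_sqrt htail).trans_eq ?_
    rw [Real.sqrt_div (sq_nonneg _), Real.sqrt_sq hs0]
  have hs : s / Real.sqrt K ≤ Real.sqrt A + 2 * (X / Real.sqrt K) := by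
    rw [div_le_iff₀ hsK]
    have : (Real.sqrt A + 2 * (X / Real.sqrt K)) * Real.sqrt K
        = Real.sqrt K * Real.sqrt A + 2 * X := by field_simp
    linarith
  have hsub : Real.sqrt (A + R) ≤ Real.sqrt A + Real.sqrt R := by
    have hR0 : 0 ≤ R := Finset.sum_nonneg fun i _ => sq_nonneg _
    rw [Real.sqrt_le_left (by positivity)]
    nlinarith [Real.sq_sqrt hA0, Real.sq_sqrt hR0,
      mul_nonneg (Real.sqrt_nonneg A) (Real.sqrt_nonneg R)]
  linarith
end
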